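/- There exists an absolute constant s₀ such that the following holds: for all integers s ≥ s₀, k ≥ 2 and n with n ≥ (5/3)·s·k − (2/3)·s, one has m(n,k,s) = C(n,k) − C(n−s,k), where C(a,b) denotes the binomial coefficient. -/

import Mathlib

open Finset

/-- The matching number of a family of finite sets: the maximum size of a
subfamily consisting of pairwise disjoint sets. -/
noncomputable def matchingNumber (F : Finset (Finset ℕ)) : ℕ :=
  sSup {t : ℕ | ∃ M : Finset (Finset ℕ), M ⊆ F ∧
    (M : Set (Finset ℕ)).Pairwise (fun A B => Disjoint A B) ∧ M.card = t}

/-- `maxSizeEMC n k s` is `m(n,k,s)`: the maximum size of a family of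
`k`-element subsets of an `n`-element set with no matching of size `s+1`. -/
noncomputable def maxSizeEMC (n k s : ℕ) : ℕ :=
  sSup {t : ℕ | ∃ F : Finset (Finset ℕ), F ⊆ (Finset.range n).powersetCard k ∧
    matchingNumber F ≤ s ∧ F.card = t}

/-!
Shift the family and sort its members by their trace on the first `s + 1` points. Members with at
least two points there may be counted trivially, so that it remains to compare the links: with
`F(T)` for the link of `T`, the claim becomes `|F(∅)| + ∑ i ≤ s, |F({i})| ≤ s * C(N, k - 1)`, where
`N = n - s - 1`.

Let `m` be maximal such that `F(∅)` contains every `k`-set with at least `i` elements below `i * m`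
for all `i ≤ k`. Counting the shadow level by level gives `|F(∅)| ≤ m |∂F(∅)| ≤ m |F({s})|`, because
the shadow of `F(∅)` lies in `F({s})`. Hence it suffices to show `(m + 1) p ≤ ∑ i < s, (1 - p i)`
for the densities `p i` of `F({i})` and `p` of `F({s})`.

To bound the sum from below, throw a random family of `t ≈ 5 s / 3` disjoint `(k - 1)`-sets. As
there is no matching of size `s + 1`, no system of distinct representatives exists, and Hall's
theorem bounds the number of pairs (link, set) that miss. Averaging uses that shifted families are
negatively correlated on disjoint random sets, so that the number of hits has variance at most its
mean. This settles all cases but the one in which `p * m` and `m` are both at least a constant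
proportion of `s`. In that case a random choice yields `d` disjoint members with one-point traces,
`r` with two-point traces and, by the definition of `m`, `r` with empty traces, where
`d + 2 r = s + 1`: a matching of size `s + 1`.
-/

open scoped FinsetFamily Function

section Shifting

variable {α : Type*} {F : Finset (Finset α)}

/-- `F` contains `t` pairwise disjoint sets, i.e. a matching of size `t`. The matching is indexed by
`Fin t`, so the empty set may be repeated in it. -/
def HasMatching (F : Finset (Finset α)) (t : ℕ) : Prop :=
  ∃ f : Fin t → Finset α, (∀ a, f a ∈ F) ∧ Pairwise (Disjoint on f)

lemma hasMatching_card {ι : Type*} [Fintype ι] (f : ι → Finset α) (hf : ∀ a, f a ∈ F)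
    (hd : Pairwise (Disjoint on f)) : HasMatching F (Fintype.card ι) :=
  ⟨f ∘ (Fintype.equivFin ι).symm, fun _ => hf _,
    hd.comp_of_injective (Fintype.equivFin ι).symm.injective⟩

variable [LinearOrder α]

/-- A family is shifted if replacing an element of a member by a smaller one gives a member. -/
def IsShifted (F : Finset (Finset α)) : Prop :=
  ∀ A ∈ F, ∀ i j, i < j → j ∈ A → i ∉ A → insert i (A.erase j) ∈ F

lemma compress_singleton_of_mem {i j : α} {A : Finset α} (hi : i ∉ A) (hj : j ∈ A) :
    UV.compress {i} {j} A = insert i (A.erase j) := by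
  rw [UV.compress_of_disjoint_of_le (disjoint_singleton_left.2 hi) (singleton_subset_iff.2 hj)]
  grind

lemma map_swap_eq_compress {i j : α} {A : Finset α} (hi : i ∉ A) :
    A.map (Equiv.swap i j).toEmbedding = UV.compress {i} {j} A := by
  by_cases hj : j ∈ A
  · rw [compress_singleton_of_mem hi hj]
    ext x
    simp only [mem_map_equiv, Equiv.symm_swap, mem_insert, mem_erase, Equiv.swap_apply_def]
    grind
  · rw [UV.compress, if_neg fun h => hj (singleton_subset_iff.1 h.2)]
    ext x
    simp only [mem_map_equiv, Equiv.symm_swap, Equiv.swap_apply_def]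
    grind

lemma HasMatching.of_compression {i j : α} {t : ℕ} (h : HasMatching (𝓒 {i} {j} F) t) :
    HasMatching F t := by
  obtain ⟨f, hf, hd⟩ := h
  by_cases hall : ∀ a, f a ∈ F
  · exact ⟨f, hall, hd⟩
  -- At most one member of the matching contains `i`; undoing the compression of that member, by
  -- swapping `i` and `j` everywhere, moves all the others to members of `F` as well.
  push Not at hall
  obtain ⟨b, hb⟩ := hall
  have hib : i ∈ f b := singleton_subset_iff.1 (UV.le_of_mem_compression_of_notMem (hf b) hb)
  have hjb : j ∉ f b :=
    disjoint_singleton_left.1 (UV.disjoint_of_mem_compression_of_notMem (hf b) hb)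
  refine ⟨fun a => (f a).map (Equiv.swap i j).toEmbedding, fun a => ?_,
    fun a c hac => (disjoint_map _).2 (hd hac)⟩
  beta_reduce
  obtain rfl | hab := eq_or_ne a b
  · rw [Equiv.swap_comm, map_swap_eq_compress hjb, UV.compress_of_disjoint_of_le
      (disjoint_singleton_left.2 hjb) (singleton_subset_iff.2 hib)]
    exact UV.sup_sdiff_mem_of_mem_compression_of_notMem (hf a) hb
  · have hia : i ∉ f a := disjoint_right.1 (hd hab) hib
    rw [map_swap_eq_compress hia]
    obtain h | ⟨ha, -⟩ := UV.mem_compression.1 (hf a)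
    · exact h.2
    · exact absurd (singleton_subset_iff.1 (UV.le_of_mem_compression_of_notMem (hf a) ha)) hia

lemma sum_compression {β M : Type*} [GeneralizedBooleanAlgebra β] [DecidableEq β]
    [DecidableRel (@Disjoint β _ _)] [DecidableLE β] [AddCommMonoid M] (u v : β) (s : Finset β)
    (w : β → M) :
    ∑ a ∈ 𝓒 u v s, w a = ∑ a ∈ s, if UV.compress u v a ∈ s then w a else w (UV.compress u v a) := by
  rw [UV.compression, sum_union UV.compress_disjoint, filter_image, sum_image UV.compress_injOn,
    sum_ite]

lemma compression_subset_powersetCard {i j n k : ℕ} (hij : i < j) {F : Finset (Finset ℕ)}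
    (hF : F ⊆ powersetCard k (range n)) : 𝓒 {i} {j} F ⊆ powersetCard k (range n) := by
  refine fun A hA => mem_powersetCard.2 ⟨?_, ?_⟩
  · by_cases hAF : A ∈ F
    · exact (mem_powersetCard.1 (hF hAF)).1
    · have h := (mem_powersetCard.1
        (hF (UV.sup_sdiff_mem_of_mem_compression_of_notMem hA hAF))).1
      intro x hx
      by_cases hxi : x = i
      · have hj : j < n := mem_range.1 (h (by grind))
        exact mem_range.2 (by omega)
      · exact h (by grind)
  · exact Set.Sized.uvCompression (by simp) (fun B hB => (mem_powersetCard.1 (hF hB)).2) hA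

lemma sum_compress_lt {i j : ℕ} (hij : i < j) {A : Finset ℕ} (hi : i ∉ A) (hj : j ∈ A) :
    ∑ x ∈ UV.compress {i} {j} A, x < ∑ x ∈ A, x := by
  rw [compress_singleton_of_mem hi hj, sum_insert (fun h => hi (mem_of_mem_erase h)),
    ← add_sum_erase A (fun x => x) hj]
  exact Nat.add_lt_add_right hij _

lemma sum_compress_le {i j : ℕ} (hij : i < j) (A : Finset ℕ) :
    ∑ x ∈ UV.compress {i} {j} A, x ≤ ∑ x ∈ A, x := by
  by_cases h : i ∉ A ∧ j ∈ A
  · exact (sum_compress_lt hij h.1 h.2).le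
  · rw [UV.compress, if_neg (by simpa using h)]

lemma exists_isShifted {n k : ℕ} (F : Finset (Finset ℕ)) (hF : F ⊆ powersetCard k (range n)) :
    ∃ F' ⊆ powersetCard k (range n), #F' = #F ∧ IsShifted F' ∧
      ∀ t, HasMatching F' t → HasMatching F t := by
  induction h : ∑ A ∈ F, ∑ x ∈ A, x using Nat.strong_induction_on generalizing F with
  | _ w ih =>
  by_cases hS : IsShifted F
  · exact ⟨F, hF, rfl, hS, fun _ => id⟩
  unfold IsShifted at hS
  push Not at hS
  obtain ⟨A, hA, i, j, hij, hj, hi, hA'⟩ := hS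
  rw [← compress_singleton_of_mem hi hj] at hA'
  have hlt : ∑ B ∈ 𝓒 {i} {j} F, ∑ x ∈ B, x < w := by
    rw [← h, sum_compression]
    refine sum_lt_sum (fun B _ => ?_) ⟨A, hA, ?_⟩
    · split_ifs
      exacts [le_rfl, sum_compress_le hij B]
    · rw [if_neg hA']
      exact sum_compress_lt hij hi hj
  obtain ⟨F', hF', hcard, hshift, hmatch⟩ :=
    ih _ hlt _ (compression_subset_powersetCard hij hF) rfl
  exact ⟨F', hF', hcard.trans (UV.card_compression _ _ _), hshift,
    fun t ht => (hmatch t ht).of_compression⟩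

lemma card_filter_lt_mono (A : Finset α) {x y : α} (h : x ≤ y) :
    #{a ∈ A | a < x} ≤ #{a ∈ A | a < y} :=
  card_le_card (monotone_filter_right A fun _ _ ha => lt_of_lt_of_le ha h)

lemma exists_exchange {A B : Finset α} (hcard : #A = #B) (hne : A ≠ B)
    (h : ∀ x, #{b ∈ B | b < x} ≤ #{a ∈ A | a < x}) :
    ∃ i ∈ A, i ∉ B ∧ ∃ j ∈ B, j ∉ A ∧ i < j ∧ ∀ b ∈ B, b < j → b ∈ A := by
  have hA : (A \ B).Nonempty := sdiff_nonempty.2 fun hs => hne (eq_of_subset_of_card_le hs hcard.ge)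
  have hB : (B \ A).Nonempty :=
    sdiff_nonempty.2 fun hs => hne (eq_of_subset_of_card_le hs hcard.le).symm
  obtain ⟨hiA, hiB⟩ := mem_sdiff.1 ((A \ B).min'_mem hA)
  obtain ⟨hjB, hjA⟩ := mem_sdiff.1 ((B \ A).min'_mem hB)
  refine ⟨_, hiA, hiB, _, hjB, hjA, ?_, fun b hb hbj => ?_⟩
  · by_contra! hji
    have hlt := hji.lt_of_ne fun e => hiB (e ▸ hjB)
    refine (h ((A \ B).min' hA)).not_gt (card_lt_card ⟨fun a ha => ?_, fun hs => ?_⟩)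
    · rw [mem_filter] at ha ⊢
      by_contra hab
      exact (min'_le (A \ B) a (by grind)).not_gt ha.2
    · exact hjA (mem_filter.1 (hs (mem_filter.2 ⟨hjB, hlt⟩))).1
  · by_contra hbA
    exact (min'_le _ _ (mem_sdiff.2 ⟨hb, hbA⟩)).not_gt hbj

lemma card_filter_lt_insert_erase_le {A B : Finset α} {i j : α} (hiA : i ∈ A) (hiB : i ∉ B)
    (hjB : j ∈ B) (hij : i < j) (hlt : ∀ b ∈ B, b < j → b ∈ A)
    (h : ∀ x, #{b ∈ B | b < x} ≤ #{a ∈ A | a < x}) (x : α) :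
    #{b ∈ insert i (B.erase j) | b < x} ≤ #{a ∈ A | a < x} := by
  obtain hxj | hjx := le_or_gt x j
  · obtain hxi | _ := le_or_gt x i
    · exact (card_le_card (by grind)).trans (h x)
    · exact card_le_card (by grind)
  · refine le_trans (le_of_eq ?_) (h x)
    have hj : j ∈ B.filter (· < x) := mem_filter.2 ⟨hjB, hjx⟩
    rw [filter_insert, if_pos (hij.trans hjx), filter_erase, card_insert_of_notMem (by grind),
      card_erase_add_one hj]

lemma IsShifted.mem_of_card_filter_lt_le (hF : IsShifted F) {A B : Finset α} (hB : B ∈ F)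
    (hcard : #A = #B) (h : ∀ x, #{b ∈ B | b < x} ≤ #{a ∈ A | a < x}) : A ∈ F := by
  induction hc : #(B \ A) using Nat.strong_induction_on generalizing B with
  | _ c ih =>
  obtain rfl | hne := eq_or_ne A B
  · exact hB
  obtain ⟨i, hiA, hiB, j, hjB, hjA, hij, hlt⟩ := exists_exchange hcard hne h
  refine ih _ ?_ (hF B hB i j hij hjB hiB) ?_
    (card_filter_lt_insert_erase_le hiA hiB hjB hij hlt h) rfl
  · rw [← hc]
    exact card_lt_card ⟨by grind, fun hs => by grind [hs (mem_sdiff.2 ⟨hjB, hjA⟩)]⟩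
  · rw [card_insert_of_notMem (by grind), card_erase_add_one hjB, hcard]

end Shifting

section Full

variable {F : Finset (Finset ℕ)} {A : Finset ℕ} {k m a : ℕ}

/-- Every `k`-set with at least `i` elements below `i * m` for all `1 ≤ i ≤ k` belongs to `F`.
For a shifted family of `k`-sets this says that `{m - 1, 2 * m - 1, …, k * m - 1} ∈ F`. -/
def IsFull (F : Finset (Finset ℕ)) (k m : ℕ) : Prop :=
  ∀ A : Finset ℕ, #A = k → (∀ i, 1 ≤ i → i ≤ k → i ≤ #{x ∈ A | x < i * m}) → A ∈ F

lemma exists_le_card_filter_of_not_isFull (hS : IsShifted F) (hk : 1 ≤ k)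
    (hu : (F : Set (Finset ℕ)).Sized k) (hF : ¬ IsFull F k (m + 1)) (hA : A ∈ F) :
    ∃ i, 1 ≤ i ∧ i ≤ k ∧ i ≤ #{x ∈ A | x < i * (m + 1) - 1} := by
  by_contra! hlt
  refine hF fun B hB hcount => hS.mem_of_card_filter_lt_le hA (hB.trans (hu hA).symm) fun x => ?_
  obtain hkx | hxk := le_or_gt k (x / (m + 1))
  · calc #{y ∈ A | y < x} ≤ k := hu hA ▸ card_filter_le _ _
      _ ≤ #{y ∈ B | y < k * (m + 1)} := hcount k hk le_rfl
      _ ≤ #{y ∈ B | y < x} :=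
        card_filter_lt_mono B ((Nat.le_div_iff_mul_le m.succ_pos).1 hkx)
  · have hx : x ≤ (x / (m + 1) + 1) * (m + 1) - 1 := Nat.le_sub_one_of_lt
      (mul_comm (m + 1) _ ▸ Nat.lt_mul_div_succ x m.succ_pos)
    have hA' : #{y ∈ A | y < x} ≤ x / (m + 1) := Nat.lt_succ_iff.1
      ((card_filter_lt_mono A hx).trans_lt (hlt _ (Nat.le_add_left _ _) hxk))
    obtain h0 | hpos := Nat.eq_zero_or_pos (x / (m + 1))
    · omega
    · exact hA'.trans ((hcount _ hpos hxk.le).trans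
        (card_filter_lt_mono B (Nat.div_mul_le_self _ _)))

/-- The last `i ≤ k` for which `A` has at least `i - c` elements below `i * (m + 1) - 1`. It is used
with `c = 0` for the members of a family and with `c = 1` for the sets in its shadow. -/
def lastIndex (m k c : ℕ) (A : Finset ℕ) : ℕ :=
  Nat.findGreatest (fun i => i ≤ #{x ∈ A | x < i * (m + 1) - 1} + c) k

lemma card_filter_lt_lastIndex (hA : #A = k) {i : ℕ} (hi : 1 ≤ i) (hiA : lastIndex m k 0 A = i) :
    #{x ∈ A | x < i * (m + 1) - 1} = i := by
  obtain ⟨hik, hle, hgt⟩ := Nat.findGreatest_eq_iff.1 hiA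
  refine le_antisymm ?_ (hle (by omega))
  by_contra! hlt
  have hcard : #{x ∈ A | x < i * (m + 1) - 1} ≤ k := hA ▸ card_filter_le _ _
  have hmono := card_filter_lt_mono A
    (Nat.sub_le_sub_right (Nat.mul_le_mul_right (m + 1) i.le_succ) 1)
  exact hgt i.lt_succ_self (by omega) (Nat.succ_le_of_lt (hlt.trans_le hmono))

lemma lastIndex_erase {i x : ℕ} (hiA : lastIndex m k 0 A = i) (hxA : x ∈ A)
    (hx : x < i * (m + 1) - 1) : lastIndex m k 1 (A.erase x) = i := by
  have hcard : ∀ j, i ≤ j → #{y ∈ A.erase x | y < j * (m + 1) - 1} + 1 =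
      #{y ∈ A | y < j * (m + 1) - 1} := fun j hij => by
    have hxj : x ∈ {y ∈ A | y < j * (m + 1) - 1} := mem_filter.2
      ⟨hxA, hx.trans_le (Nat.sub_le_sub_right (Nat.mul_le_mul_right _ hij) 1)⟩
    rw [filter_erase, card_erase_add_one hxj]
  obtain ⟨hik, hle, hgt⟩ := Nat.findGreatest_eq_iff.1 hiA
  refine Nat.findGreatest_eq_iff.2 ⟨hik, fun h0 => ?_, fun j hj hjk => ?_⟩
  · exact hcard i le_rfl ▸ hle h0
  · exact hcard j hj.le ▸ hgt hj hjk

lemma card_filter_lastIndex_le (hu : (F : Set (Finset ℕ)).Sized k) {i : ℕ} (hi : 1 ≤ i) :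
    #{A ∈ F | lastIndex m k 0 A = i} ≤ m * #{L ∈ F.shadow | lastIndex m k 1 L = i} := by
  suffices h : #{A ∈ F | lastIndex m k 0 A = i} * i ≤
      #{L ∈ F.shadow | lastIndex m k 1 L = i} * (m * i) from
    Nat.le_of_mul_le_mul_right (by linarith) hi
  refine card_mul_le_card_mul (fun A L => ∃ x ∈ A, x < i * (m + 1) - 1 ∧ A.erase x = L)
    (fun A hA => ?_) (fun L hL => ?_)
  · obtain ⟨hAF, hiA⟩ := mem_filter.1 hA
    calc i = #({x ∈ A | x < i * (m + 1) - 1}.image A.erase) := by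
          rw [card_image_of_injOn ((A.erase_injOn).mono (filter_subset _ _)),
            card_filter_lt_lastIndex (hu hAF) hi hiA]
      _ ≤ _ := card_le_card fun L hL => by
          obtain ⟨x, hx, rfl⟩ := mem_image.1 hL
          obtain ⟨hxA, hxi⟩ := mem_filter.1 hx
          exact (mem_bipartiteAbove _).2 ⟨mem_filter.2 ⟨erase_mem_shadow hAF hxA,
            lastIndex_erase hiA hxA hxi⟩, x, hxA, hxi, rfl⟩
  · obtain ⟨-, hiL⟩ := mem_filter.1 hL
    have hle : i ≤ #{x ∈ L | x < i * (m + 1) - 1} + 1 :=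
      (Nat.findGreatest_eq_iff.1 hiL).2.1 (by omega)
    calc _ ≤ #((range (i * (m + 1) - 1) \ {x ∈ L | x < i * (m + 1) - 1}).image
            fun x => insert x L) := card_le_card fun A hA => by
          obtain ⟨-, x, hxA, hxi, rfl⟩ := (mem_bipartiteBelow _).1 hA
          exact mem_image.2 ⟨x, by simp [hxi], insert_erase hxA⟩
      _ ≤ #(range (i * (m + 1) - 1) \ {x ∈ L | x < i * (m + 1) - 1}) := card_image_le
      _ = i * (m + 1) - 1 - #{x ∈ L | x < i * (m + 1) - 1} := by
          rw [card_sdiff_of_subset fun x hx => mem_range.2 (mem_filter.1 hx).2, card_range]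
      _ ≤ m * i := by
          have : i * (m + 1) = m * i + i := by ring
          omega

lemma card_le_mul_card_shadow (hS : IsShifted F) (hk : 1 ≤ k)
    (hu : (F : Set (Finset ℕ)).Sized k) (hF : ¬ IsFull F k (m + 1)) :
    #F ≤ m * #F.shadow := by
  have hmaps : ∀ A ∈ F, lastIndex m k 0 A ∈ Icc 1 k := fun A hA => by
    obtain ⟨i, hi, hik, hle⟩ := exists_le_card_filter_of_not_isFull hS hk hu hF hA
    exact mem_Icc.2 ⟨hi.trans (Nat.le_findGreatest hik hle), Nat.findGreatest_le k⟩
  calc #F = ∑ i ∈ Icc 1 k, #{A ∈ F | lastIndex m k 0 A = i} := card_eq_sum_card_fiberwise hmaps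
    _ ≤ ∑ i ∈ Icc 1 k, m * #{L ∈ F.shadow | lastIndex m k 1 L = i} :=
      sum_le_sum fun i hi => card_filter_lastIndex_le hu (mem_Icc.1 hi).1
    _ = m * ∑ i ∈ Icc 1 k, #{L ∈ F.shadow | lastIndex m k 1 L = i} := (mul_sum _ _ _).symm
    _ ≤ m * #F.shadow := by
      rw [sum_card_fiberwise_eq_card_filter]
      exact Nat.mul_le_mul_left m (card_filter_le _ _)

lemma exists_injective_nth {V : Finset ℕ} (hV : ∀ i, 1 ≤ i → i ≤ k → i * a ≤ #{x ∈ V | x < i * m}) :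
    ∃ g : Fin k × Fin a → ℕ, g.Injective ∧ (∀ p, g p ∈ V) ∧
      ∀ p (i : ℕ), p.1 < i → i ≤ k → g p < i * m := by
  have hfin : (Set.ofPred (· ∈ V)).Finite := V.finite_toSet
  have hcount : ∀ x, Nat.count (· ∈ V) x = #{y ∈ V | y < x} := fun x => by
    rw [Nat.count_eq_card_filter_range]
    congr 1
    grind
  have hindex : ∀ (p : Fin k × Fin a) (i : ℕ), p.1 < i → (finProdFinEquiv p : ℕ) < i * a :=
    fun ⟨c, j⟩ i hi => calc
      (j : ℕ) + a * c < a + a * c := Nat.add_lt_add_right j.2 _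
      _ = (c + 1) * a := by ring
      _ ≤ i * a := Nat.mul_le_mul_right a hi
  have hcard : ∀ p : Fin k × Fin a, (finProdFinEquiv p : ℕ) < #hfin.toFinset := fun p => by
    have hk : k * a ≤ #{x ∈ V | x < k * m} := hV k p.1.pos le_rfl
    rw [show hfin.toFinset = V by ext; simp]
    exact (hindex p k p.1.2).trans_le (hk.trans (card_filter_le _ _))
  refine ⟨fun p => Nat.nth (· ∈ V) (finProdFinEquiv p), fun p q h => ?_, fun p => ?_,
    fun p i hi hik => ?_⟩
  · exact finProdFinEquiv.injective (Fin.ext (Nat.nth_injOn hfin (hcard p) (hcard q) h))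
  · exact Nat.nth_mem_of_lt_card hfin (hcard p)
  · exact Nat.nth_lt_of_lt_count ((hindex p i hi).trans_le (hcount _ ▸ hV i (by omega) hik))

lemma IsFull.exists_matching_subset (hF : IsFull F k m) {V : Finset ℕ}
    (hV : ∀ i, 1 ≤ i → i ≤ k → i * a ≤ #{x ∈ V | x < i * m}) :
    ∃ f : Fin a → Finset ℕ, (∀ j, f j ∈ F) ∧ (∀ j, f j ⊆ V) ∧ Pairwise (Disjoint on f) := by
  obtain ⟨g, hinj, hgV, hlt⟩ := exists_injective_nth hV
  have hinj' : ∀ j, Function.Injective fun c => g (c, j) := fun j c d h =>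
    congrArg Prod.fst (hinj h)
  refine ⟨fun j => univ.image fun c => g (c, j), fun j => hF _ ?_ fun i _ hik => ?_,
    fun j => image_subset_iff.2 fun c _ => hgV _,
    fun j j' hjj' => disjoint_left.2 fun x hx hx' => ?_⟩
  · rw [card_image_of_injective _ (hinj' j), card_univ, Fintype.card_fin]
  · calc i = #((univ.filter fun c : Fin k => c < i).image fun c => g (c, j)) := by
          rw [card_image_of_injective _ (hinj' j), Fin.card_filter_val_lt, min_eq_right hik]
      _ ≤ _ := card_le_card fun x hx => by
          obtain ⟨c, hc, rfl⟩ := mem_image.1 hx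
          exact mem_filter.2 ⟨mem_image_of_mem _ (mem_univ c),
            hlt _ i (mem_filter.1 hc).2 hik⟩
  · obtain ⟨c, -, rfl⟩ := mem_image.1 hx
    obtain ⟨d, -, h⟩ := mem_image.1 hx'
    exact hjj' (congrArg Prod.snd (hinj h)).symm

lemma IsFull.mul_le {N : ℕ} (hF : IsFull F k m) (hFN : F ⊆ powersetCard k (range N)) :
    k * m ≤ N := by
  obtain rfl | hm := m.eq_zero_or_pos
  · simp
  have hpos : ∀ i, 1 ≤ (i + 1) * m := fun i => Nat.mul_pos i.succ_pos hm
  have hinj : Function.Injective fun i => (i + 1) * m - 1 := fun i j hij => by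
    have h : (i + 1) * m = (j + 1) * m := by
      have := hpos i; have := hpos j; simp only at hij; omega
    simpa using Nat.eq_of_mul_eq_mul_right hm h
  have hmem : (range k).image (fun i => (i + 1) * m - 1) ∈ F := by
    refine hF _ (by rw [card_image_of_injective _ hinj, card_range]) fun i _ hik => ?_
    calc i = #((range i).image fun i => (i + 1) * m - 1) := by
          rw [card_image_of_injective _ hinj, card_range]
      _ ≤ _ := card_le_card fun x hx => by
          obtain ⟨j, hj, rfl⟩ := mem_image.1 hx
          have hji := mem_range.1 hj
          refine mem_filter.2 ⟨mem_image_of_mem _ (mem_range.2 (hji.trans_le hik)), ?_⟩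
          exact (Nat.sub_one_lt_of_lt (hpos j)).trans_le (Nat.mul_le_mul_right m hji)
  obtain rfl | hk := k.eq_zero_or_pos
  · simp
  have hlast := mem_range.1 <| (mem_powersetCard.1 (hFN hmem)).1 <|
    mem_image_of_mem _ (mem_range.2 (Nat.sub_one_lt_of_lt hk))
  rw [Nat.sub_add_cancel hk] at hlast
  omega

end Full

section NegativeCorrelation

open scoped Nat

lemma IsShifted.nonMemberSubfamily {α : Type*} [LinearOrder α] {F : Finset (Finset α)} {a : α}
    (hF : IsShifted F) (ha : ∀ A ∈ F, ∀ x ∈ A, x ≤ a) : IsShifted (F.nonMemberSubfamily a) := by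
  intro A hA i j hij hj hi
  obtain ⟨hAF, haA⟩ := mem_nonMemberSubfamily.1 hA
  have hia := hij.trans_le (ha A hAF j hj)
  exact mem_nonMemberSubfamily.2 ⟨hF A hAF i j hij hj hi, by grind⟩

lemma IsShifted.memberSubfamily {α : Type*} [LinearOrder α] {F : Finset (Finset α)} {a : α}
    (hF : IsShifted F) (ha : ∀ A ∈ F, ∀ x ∈ A, x ≤ a) : IsShifted (F.memberSubfamily a) := by
  intro A hA i j hij hj hi
  obtain ⟨hAF, haA⟩ := mem_memberSubfamily.1 hA
  have hia := hij.trans_le (ha _ hAF j (mem_insert_of_mem hj))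
  have h := hF _ hAF i j hij (mem_insert_of_mem hj) (by grind)
  rw [erase_insert_of_ne (by grind), insert_comm] at h
  exact mem_memberSubfamily.2 ⟨h, by grind⟩

variable {N l : ℕ} {F G : Finset (Finset ℕ)}

lemma nonMemberSubfamily_subset_powersetCard (hF : F ⊆ powersetCard l (range (N + 1))) :
    F.nonMemberSubfamily N ⊆ powersetCard l (range N) := fun A hA => by
  obtain ⟨hAF, hN⟩ := mem_nonMemberSubfamily.1 hA
  obtain ⟨hAN, hcard⟩ := mem_powersetCard.1 (hF hAF)
  exact mem_powersetCard.2 ⟨(subset_insert_iff_of_notMem hN).1 (range_add_one ▸ hAN), hcard⟩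

lemma memberSubfamily_subset_powersetCard (hF : F ⊆ powersetCard (l + 1) (range (N + 1))) :
    F.memberSubfamily N ⊆ powersetCard l (range N) := fun A hA => by
  obtain ⟨hAF, hN⟩ := mem_memberSubfamily.1 hA
  obtain ⟨hAN, hcard⟩ := mem_powersetCard.1 (hF hAF)
  rw [range_add_one] at hAN
  rw [card_insert_of_notMem hN] at hcard
  exact mem_powersetCard.2 ⟨(insert_subset_insert_iff hN).1 hAN, by omega⟩

lemma le_of_mem_of_subset_powersetCard (hF : F ⊆ powersetCard l (range (N + 1))) :
    ∀ A ∈ F, ∀ x ∈ A, x ≤ N := fun _ hA _ hx =>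
  Nat.lt_succ_iff.1 (mem_range.1 ((mem_powersetCard.1 (hF hA)).1 hx))

lemma IsShifted.card_memberSubfamily_mul_le (hS : IsShifted F)
    (hF : F ⊆ powersetCard (l + 1) (range (N + 1))) :
    #(F.memberSubfamily N) * (N - l) ≤ #(F.nonMemberSubfamily N) * (l + 1) := by
  refine card_mul_le_card_mul (· ⊆ ·) (fun B hB => ?_) (fun A hA => ?_)
  · obtain ⟨hBN, hcard⟩ := mem_powersetCard.1 (memberSubfamily_subset_powersetCard hF hB)
    obtain ⟨hBF, hN⟩ := mem_memberSubfamily.1 hB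
    calc N - l = #((range N \ B).image fun x => insert x B) := by
          rw [card_image_of_injOn fun x hx y _ h => (insert_inj (mem_sdiff.1 hx).2).1 h,
            card_sdiff_of_subset hBN, card_range, hcard]
      _ ≤ _ := card_le_card fun A hA => by
          obtain ⟨x, hx, rfl⟩ := mem_image.1 hA
          rw [mem_sdiff, mem_range] at hx
          have h := hS _ hBF x N hx.1 (mem_insert_self N B) (by grind)
          rw [erase_insert hN] at h
          exact (mem_bipartiteAbove _).2
            ⟨mem_nonMemberSubfamily.2 ⟨h, by grind⟩, subset_insert _ _⟩
  · have hA' := (mem_powersetCard.1 (nonMemberSubfamily_subset_powersetCard hF hA)).2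
    calc _ ≤ #(powersetCard l A) := card_le_card fun B hB => by
          obtain ⟨hBF, hBA⟩ := (mem_bipartiteBelow _).1 hB
          exact mem_powersetCard.2
            ⟨hBA, (mem_powersetCard.1 (memberSubfamily_subset_powersetCard hF hBF)).2⟩
      _ = l + 1 := by rw [card_powersetCard, hA', Nat.choose_succ_self_right]

/-- The pairs `(A, B) ∈ F × G` with `A` and `B` disjoint. -/
def disjointPairs (F G : Finset (Finset ℕ)) : Finset (Finset ℕ × Finset ℕ) :=
  {z ∈ F ×ˢ G | Disjoint z.1 z.2}

lemma card_disjointPairs_le (F G : Finset (Finset ℕ)) : #(disjointPairs F G) ≤ #F * #G :=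
  card_product F G ▸ card_filter_le _ _

lemma card_disjointPairs_le_add (N : ℕ) (F G : Finset (Finset ℕ)) :
    #(disjointPairs F G) ≤
      #(disjointPairs (F.nonMemberSubfamily N) (G.nonMemberSubfamily N)) +
      #(disjointPairs (F.memberSubfamily N) (G.nonMemberSubfamily N)) +
      #(disjointPairs (F.nonMemberSubfamily N) (G.memberSubfamily N)) := by
  have hsub : disjointPairs F G ⊆
      disjointPairs (F.nonMemberSubfamily N) (G.nonMemberSubfamily N) ∪
      (disjointPairs (F.memberSubfamily N) (G.nonMemberSubfamily N)).image
        (Prod.map (insert N) id) ∪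
      (disjointPairs (F.nonMemberSubfamily N) (G.memberSubfamily N)).image
        (Prod.map id (insert N)) := by
    rintro ⟨A, B⟩ hAB
    simp only [disjointPairs, mem_filter, mem_product] at hAB
    obtain ⟨⟨hA, hB⟩, hd⟩ := hAB
    simp only [mem_union, mem_image, disjointPairs, mem_filter, mem_product,
      mem_nonMemberSubfamily, mem_memberSubfamily, Prod.exists, Prod.map_apply, Prod.mk.injEq, id]
    by_cases hNA : N ∈ A
    · exact .inl (.inr ⟨A.erase N, B, ⟨⟨⟨by rwa [insert_erase hNA], notMem_erase _ _⟩, hB,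
        disjoint_left.1 hd hNA⟩, hd.mono_left (erase_subset _ _)⟩, insert_erase hNA, rfl⟩)
    by_cases hNB : N ∈ B
    · exact .inr ⟨A, B.erase N, ⟨⟨⟨hA, hNA⟩, by rwa [insert_erase hNB], notMem_erase _ _⟩,
        hd.mono_right (erase_subset _ _)⟩, rfl, insert_erase hNB⟩
    · exact .inl (.inl ⟨⟨⟨hA, hNA⟩, hB, hNB⟩, hd⟩)
  calc _ ≤ _ := card_le_card hsub
    _ ≤ _ := card_union_le _ _
    _ ≤ _ := Nat.add_le_add ((card_union_le _ _).trans (Nat.add_le_add_left card_image_le _))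
        card_image_le

lemma disjointPairs_eq_empty {p q : ℕ} (hF : F ⊆ powersetCard p (range N))
    (hG : G ⊆ powersetCard q (range N)) (h : N < p + q) : disjointPairs F G = ∅ := by
  refine filter_eq_empty_iff.2 fun ⟨A, B⟩ hAB hd => h.not_ge ?_
  obtain ⟨hA, hB⟩ := mem_product.1 hAB
  obtain ⟨hAN, rfl⟩ := mem_powersetCard.1 (hF hA)
  obtain ⟨hBN, rfl⟩ := mem_powersetCard.1 (hG hB)
  calc #A + #B = #(A ∪ B) := (card_union_of_disjoint hd).symm
    _ ≤ N := by simpa using card_le_card (union_subset hAN hBN)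

-- The difference of the two sides is `X * Y` times the product of the two density gaps
-- `f₀ (p + 1) - f₁ (q + 1 + r)` and `g₀ (q + 1) - g₁ (p + 1 + r)`.
lemma negative_correlation_step (f₀ f₁ g₀ g₁ p q r X Y : ℕ) (hf : f₁ * (q + 1 + r) ≤ f₀ * (p + 1))
    (hg : g₁ * (p + 1 + r) ≤ g₀ * (q + 1)) :
    (p + q + 1 + r + 1) * (r * (f₀ * g₀ * X * Y) + f₁ * g₀ * ((q + r + 1) * X) * Y +
        f₀ * g₁ * X * ((p + r + 1) * Y)) ≤
      (f₁ + f₀) * (g₁ + g₀) * ((q + r + 1) * X) * ((p + r + 1) * Y) := by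
  zify at *
  have hgap : (0 : ℤ) ≤ ((f₀ : ℤ) * (p + 1) - f₁ * (q + 1 + r)) *
      (g₀ * (q + 1) - g₁ * (p + 1 + r)) * (X * Y) :=
    mul_nonneg (mul_nonneg (by linarith) (by linarith)) (by positivity)
  rw [← sub_nonneg]
  exact hgap.trans_eq (by ring)

lemma card_disjointPairs_mul_le_of_subfamilies {p q r : ℕ} (hN : N = p + q + 1 + r)
    (hF : F ⊆ powersetCard (p + 1) (range (N + 1))) (hG : G ⊆ powersetCard (q + 1) (range (N + 1)))
    (hSF : IsShifted F) (hSG : IsShifted G)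
    (h00 : #(disjointPairs (F.nonMemberSubfamily N) (G.nonMemberSubfamily N)) * r ! * N ! ≤
      r * (#(F.nonMemberSubfamily N) * #(G.nonMemberSubfamily N) * (q + r)! * (p + r)!))
    (h10 : #(disjointPairs (F.memberSubfamily N) (G.nonMemberSubfamily N)) * r ! * N ! ≤
      #(F.memberSubfamily N) * #(G.nonMemberSubfamily N) * (q + r + 1)! * (p + r)!)
    (h01 : #(disjointPairs (F.nonMemberSubfamily N) (G.memberSubfamily N)) * r ! * N ! ≤
      #(F.nonMemberSubfamily N) * #(G.memberSubfamily N) * (q + r)! * (p + r + 1)!) :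
    #(disjointPairs F G) * r ! * (N + 1)! ≤ #F * #G * (q + r + 1)! * (p + r + 1)! := by
  have hdF := hSF.card_memberSubfamily_mul_le hF
  have hdG := hSG.card_memberSubfamily_mul_le hG
  rw [show N - p = q + 1 + r by omega] at hdF
  rw [show N - q = p + 1 + r by omega] at hdG
  have hstep := negative_correlation_step _ _ _ _ p q r (q + r)! (p + r)! hdF hdG
  rw [card_memberSubfamily_add_card_nonMemberSubfamily,
    card_memberSubfamily_add_card_nonMemberSubfamily, ← hN, ← Nat.factorial_succ,
    ← Nat.factorial_succ] at hstep
  calc #(disjointPairs F G) * r ! * (N + 1)!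
      = (N + 1) * (#(disjointPairs F G) * r ! * N !) := by rw [Nat.factorial_succ]; ring
    _ ≤ _ := Nat.mul_le_mul_left _
      (Nat.mul_le_mul_right _ (Nat.mul_le_mul_right _ (card_disjointPairs_le_add N F G)))
    _ ≤ _ := by
      refine Nat.mul_le_mul_left _ ?_
      rw [add_mul, add_mul, add_mul, add_mul]
      exact Nat.add_le_add (Nat.add_le_add h00 h10) h01
    _ ≤ _ := hstep

/-- Shifted families are negatively correlated: for random disjoint `A` and `B` of sizes `p` and
`q`, the probability that `A ∈ F` and `B ∈ G` is at most the product of the densities. The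
factorials clear the denominators of this inequality. -/
lemma IsShifted.card_disjointPairs_mul_le {p q r : ℕ} (hN : p + q + r = N)
    (hF : F ⊆ powersetCard p (range N)) (hG : G ⊆ powersetCard q (range N))
    (hSF : IsShifted F) (hSG : IsShifted G) :
    #(disjointPairs F G) * r ! * N ! ≤ #F * #G * (q + r)! * (p + r)! := by
  induction N generalizing p q r F G with
  | zero =>
    obtain ⟨rfl, rfl, rfl⟩ : p = 0 ∧ q = 0 ∧ r = 0 := by omega
    simpa using card_disjointPairs_le F G
  | succ N ih =>
  rcases p with - | p
  · calc _ ≤ #F * #G * r ! * (N + 1)! := by gcongr; exact card_disjointPairs_le F G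
      _ = _ := by rw [← hN, Nat.zero_add, Nat.zero_add]; ring
  rcases q with - | q
  · calc _ ≤ #F * #G * r ! * (N + 1)! := by gcongr; exact card_disjointPairs_le F G
      _ = _ := by rw [← hN, Nat.zero_add, Nat.add_zero]
  have hF₀ := nonMemberSubfamily_subset_powersetCard hF
  have hF₁ := memberSubfamily_subset_powersetCard hF
  have hG₀ := nonMemberSubfamily_subset_powersetCard hG
  have hG₁ := memberSubfamily_subset_powersetCard hG
  have hSF₀ := hSF.nonMemberSubfamily (le_of_mem_of_subset_powersetCard hF)
  have hSF₁ := hSF.memberSubfamily (le_of_mem_of_subset_powersetCard hF)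
  have hSG₀ := hSG.nonMemberSubfamily (le_of_mem_of_subset_powersetCard hG)
  have hSG₁ := hSG.memberSubfamily (le_of_mem_of_subset_powersetCard hG)
  have h10 := ih (r := r) (by omega) hF₁ hG₀ hSF₁ hSG₀
  have h01 := ih (r := r) (by omega) hF₀ hG₁ hSF₀ hSG₁
  have h00 : #(disjointPairs (F.nonMemberSubfamily N) (G.nonMemberSubfamily N)) * r ! * N ! ≤
      r * (#(F.nonMemberSubfamily N) * #(G.nonMemberSubfamily N) * (q + r)! * (p + r)!) := by
    rcases r with - | r
    · simp [disjointPairs_eq_empty hF₀ hG₀ (by omega)]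
    · have h := ih (r := r) (by omega) hF₀ hG₀ hSF₀ hSG₀
      rw [Nat.factorial_succ, show q + (r + 1) = q + 1 + r by ring,
        show p + (r + 1) = p + 1 + r by ring]
      linarith [Nat.mul_le_mul_left (r + 1) h]
  rw [Nat.add_right_comm] at h10 h01 ⊢
  rw [Nat.add_right_comm p]
  exact card_disjointPairs_mul_le_of_subfamilies (by omega) hF hG hSF hSG h00 h10 h01

end NegativeCorrelation

section Probability

open scoped BigOperators

variable {Ω : Type*} [Fintype Ω]

open scoped Classical in
/-- The probability of the event `P` for an element of the finite type `Ω` chosen uniformly at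
random. -/
noncomputable def prob (P : Ω → Prop) : ℝ := (({ω | P ω} : Finset Ω).dens : ℝ)

lemma prob_eq_card_div (P : Ω → Prop) [DecidablePred P] :
    prob P = #{ω | P ω} / Fintype.card Ω := by
  rw [prob, nnratCast_dens]
  congr!

lemma prob_eq_expect (P : Ω → Prop) [DecidablePred P] :
    prob P = 𝔼 ω, if P ω then (1 : ℝ) else 0 := by
  rw [Fintype.expect_eq_sum_div_card, prob_eq_card_div, natCast_card_filter]

lemma prob_mono {P Q : Ω → Prop} (h : ∀ ω, P ω → Q ω) : prob P ≤ prob Q := by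
  classical
  unfold prob
  exact_mod_cast dens_le_dens (monotone_filter_right _ fun ω _ => h ω)

lemma prob_or_le (P Q : Ω → Prop) : prob (fun ω => P ω ∨ Q ω) ≤ prob P + prob Q := by
  classical
  simp only [prob, filter_or]
  exact_mod_cast dens_union_le _ _

lemma prob_exists_le {ι : Type*} (s : Finset ι) (P : ι → Ω → Prop) :
    prob (fun ω => ∃ i ∈ s, P i ω) ≤ ∑ i ∈ s, prob (P i) := by
  classical
  have hunion : ({ω | ∃ i ∈ s, P i ω} : Finset Ω) = s.biUnion fun i => {ω | P i ω} := by
    ext ω; simp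
  simp only [prob, hunion]
  exact_mod_cast dens_biUnion_le

lemma exists_not_of_prob_lt_one [Nonempty Ω] {P : Ω → Prop} (h : prob P < 1) : ∃ ω, ¬P ω := by
  contrapose! h
  simp [prob, h]

variable [Nonempty Ω]

lemma prob_le_abs_sub_mul_sq_le {X : Ω → ℝ} {μ c : ℝ} (hc : 0 ≤ c) (hμ : 𝔼 ω, X ω = μ)
    (hsq : 𝔼 ω, X ω ^ 2 ≤ μ + μ ^ 2) : prob (fun ω => c ≤ |X ω - μ|) * c ^ 2 ≤ μ := by
  classical
  calc prob (fun ω => c ≤ |X ω - μ|) * c ^ 2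
      = 𝔼 ω, (if c ≤ |X ω - μ| then (1 : ℝ) else 0) * c ^ 2 := by
        rw [prob_eq_expect, expect_mul]
    _ ≤ 𝔼 ω, (X ω - μ) ^ 2 := by
        refine expect_le_expect fun ω _ => ?_
        split_ifs with h
        · rw [one_mul, ← sq_abs (X ω - μ)]
          gcongr
        · rw [zero_mul]
          positivity
    _ = 𝔼 ω, X ω ^ 2 - 2 * μ * 𝔼 ω, X ω + μ ^ 2 := by
        rw [mul_expect, ← Fintype.expect_const (ι := Ω) (μ ^ 2), ← expect_sub_distrib,
          ← expect_add_distrib]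
        exact expect_congr rfl fun ω _ => by ring
    _ ≤ μ := by
        rw [hμ]
        linarith

end Probability

section RandomPermutation

open scoped Nat

lemma card_perm_comp_eq {α ι : Type*} [Fintype α] [DecidableEq α] [Fintype ι] [DecidableEq ι]
    (f g : α → ι) (h : ∀ c, Fintype.card {a // f a = c} = Fintype.card {a // g a = c}) :
    #{σ : Equiv.Perm α | g ∘ σ = f} = ∏ c, (Fintype.card {a // f a = c})! := by
  let π : Equiv.Perm α := Equiv.ofFiberEquiv fun c => Fintype.equivOfCardEq (h c)
  have hπ : g ∘ π = f := funext fun a => Equiv.ofFiberEquiv_map _ a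
  rw [← DomMulAct.stabilizer_card f, Fintype.card_subtype]
  refine card_equiv (Equiv.mulLeft π⁻¹) fun σ => ?_
  simp only [mem_filter_univ, Equiv.coe_mulLeft]
  rw [← hπ, Function.comp_assoc, ← Equiv.Perm.coe_mul, mul_inv_cancel_left]

variable {N : ℕ}

lemma card_decide_mem_fiber {A B : Finset (Fin N)} (h : Disjoint A B) (c : Bool × Bool) :
    Fintype.card {x // (decide (x ∈ A), decide (x ∈ B)) = c} =
      match c with
      | (true, true) => 0
      | (true, false) => #A
      | (false, true) => #B
      | (false, false) => N - (#A + #B) := by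
  have hdisj := disjoint_left.1 h
  rw [Fintype.card_subtype]
  rcases c with ⟨_ | _, _ | _⟩ <;>
    simp only [Prod.mk.injEq, decide_eq_true_eq, decide_eq_false_iff_not]
  · calc #{x | x ∉ A ∧ x ∉ B} = #(A ∪ B)ᶜ := by congr 1; ext x; simp
      _ = N - (#A + #B) := by rw [card_compl, Fintype.card_fin, card_union_of_disjoint h]
  · congr 1; ext x; simp only [mem_filter_univ]; grind
  · congr 1; ext x; simp only [mem_filter_univ]; grind
  · rw [card_eq_zero, filter_eq_empty_iff]
    exact fun x _ hx => hdisj hx.1 hx.2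

lemma map_perm_eq_iff {α : Type*} {σ : Equiv.Perm α} {I A : Finset α} :
    I.map σ.toEmbedding = A ↔ ∀ x, σ x ∈ A ↔ x ∈ I := by
  constructor
  · rintro rfl x; simp
  · intro h
    ext y
    rw [mem_map_equiv, ← h, Equiv.apply_symm_apply]

lemma card_perm_map_eq {I J A B : Finset (Fin N)} (hIJ : Disjoint I J) (hAB : Disjoint A B)
    (hI : #I = #A) (hJ : #J = #B) :
    #{σ : Equiv.Perm (Fin N) | I.map σ.toEmbedding = A ∧ J.map σ.toEmbedding = B} =
      (#I)! * (#J)! * (N - (#I + #J))! := by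
  have hcolour : ∀ σ : Equiv.Perm (Fin N),
      (I.map σ.toEmbedding = A ∧ J.map σ.toEmbedding = B) ↔
        (fun x => (decide (x ∈ A), decide (x ∈ B))) ∘ σ =
          fun x => (decide (x ∈ I), decide (x ∈ J)) := by
    intro σ
    simp only [map_perm_eq_iff, funext_iff, Function.comp, Prod.mk.injEq, decide_eq_decide,
      forall_and]
  simp only [hcolour]
  rw [card_perm_comp_eq _ _ fun c => by
    rw [card_decide_mem_fiber hIJ, card_decide_mem_fiber hAB, hI, hJ]]
  simp only [card_decide_mem_fiber hIJ, Fintype.prod_prod_type, Fintype.prod_bool,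
    Nat.factorial_zero]
  ring

/-- The image of `I` under the permutation `σ` of `Fin N`, as a set of natural numbers. -/
def permImage (σ : Equiv.Perm (Fin N)) (I : Finset (Fin N)) : Finset ℕ :=
  (I.map σ.toEmbedding).map Fin.valEmbedding

@[simp] lemma disjoint_permImage {σ : Equiv.Perm (Fin N)} {I J : Finset (Fin N)} :
    Disjoint (permImage σ I) (permImage σ J) ↔ Disjoint I J := by
  simp [permImage]

lemma permImage_subset_permImage (σ : Equiv.Perm (Fin N)) {I J : Finset (Fin N)} (h : I ⊆ J) :
    permImage σ I ⊆ permImage σ J :=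
  map_subset_map.2 (map_subset_map.2 h)

lemma exists_map_valEmbedding_eq {A : Finset ℕ} (h : A ⊆ range N) :
    ∃ A' : Finset (Fin N), A'.map Fin.valEmbedding = A :=
  ⟨A.attachFin fun _ hx => mem_range.1 (h hx), map_valEmbedding_attachFin _⟩

variable {I J : Finset (Fin N)} {F G : Finset (Finset ℕ)}

lemma card_permImage_mem_and_mem (hIJ : Disjoint I J) (hF : F ⊆ powersetCard #I (range N))
    (hG : G ⊆ powersetCard #J (range N)) :
    #{σ : Equiv.Perm (Fin N) | permImage σ I ∈ F ∧ permImage σ J ∈ G} =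
      #(disjointPairs F G) * ((#I)! * (#J)! * (N - (#I + #J))!) := by
  rw [card_eq_sum_card_fiberwise (f := fun σ => (permImage σ I, permImage σ J))
    (t := disjointPairs F G), ← smul_eq_mul, ← sum_const]
  · refine sum_congr rfl fun ⟨A, B⟩ hAB => ?_
    simp only [disjointPairs, mem_filter, mem_product] at hAB
    obtain ⟨⟨hA, hB⟩, hdisj⟩ := hAB
    obtain ⟨hA', hAcard⟩ := mem_powersetCard.1 (hF hA)
    obtain ⟨hB', hBcard⟩ := mem_powersetCard.1 (hG hB)
    obtain ⟨A, rfl⟩ := exists_map_valEmbedding_eq hA'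
    obtain ⟨B, rfl⟩ := exists_map_valEmbedding_eq hB'
    rw [disjoint_map] at hdisj
    rw [card_map] at hAcard hBcard
    rw [← card_perm_map_eq hIJ hdisj hAcard.symm hBcard.symm]
    congr 1
    ext σ
    simp only [mem_filter, mem_univ, true_and, Prod.mk.injEq, permImage, map_inj]
    exact ⟨And.right, fun h => ⟨mem_filter.2 ⟨mem_univ σ, h.1 ▸ hA, h.2 ▸ hB⟩, h⟩⟩
  · intro σ hσ
    simp only [coe_filter, mem_univ, true_and, Set.mem_ofPred_eq] at hσ
    simpa [disjointPairs] using ⟨hσ, hIJ⟩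

/-- The proportion of the `l`-subsets of `range N` that belong to `G`. -/
noncomputable def density (N l : ℕ) (G : Finset (Finset ℕ)) : ℝ := #G / N.choose l

lemma prob_permImage_mem_and_mem (hIJ : Disjoint I J) (hF : F ⊆ powersetCard #I (range N))
    (hG : G ⊆ powersetCard #J (range N)) :
    prob (fun σ : Equiv.Perm (Fin N) => permImage σ I ∈ F ∧ permImage σ J ∈ G) =
      #(disjointPairs F G) * ((#I)! * (#J)! * (N - (#I + #J))!) / N ! := by
  rw [prob_eq_card_div, card_permImage_mem_and_mem hIJ hF hG, Fintype.card_perm, Fintype.card_fin]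
  push_cast
  rfl

lemma density_eq_mul_factorial_div {l : ℕ} (hl : l ≤ N) (G : Finset (Finset ℕ)) :
    density N l G = #G * (l ! * (N - l)!) / N ! := by
  rw [density, Nat.cast_choose ℝ hl]
  field_simp

lemma prob_permImage_mem (hF : F ⊆ powersetCard #I (range N)) :
    prob (fun σ : Equiv.Perm (Fin N) => permImage σ I ∈ F) = density N #I F := by
  have hpairs : #(disjointPairs F {∅}) = #F := by
    rw [disjointPairs, filter_true_of_mem, card_product, card_singleton, mul_one]
    simp +contextual
  have hprob := prob_permImage_mem_and_mem (J := ∅) (disjoint_empty_right I) (G := {∅}) hF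
    (by simp)
  rw [density_eq_mul_factorial_div (card_finset_fin_le I)]
  simpa [permImage, hpairs] using hprob

lemma IsShifted.prob_permImage_mem_and_mem_le (hSF : IsShifted F) (hSG : IsShifted G)
    (hIJ : Disjoint I J) (hF : F ⊆ powersetCard #I (range N)) (hG : G ⊆ powersetCard #J (range N)) :
    prob (fun σ : Equiv.Perm (Fin N) => permImage σ I ∈ F ∧ permImage σ J ∈ G) ≤
      density N #I F * density N #J G := by
  have hcard : #I + #J ≤ N := by
    rw [← card_union_of_disjoint hIJ]
    exact card_finset_fin_le _
  have hcorr := hSF.card_disjointPairs_mul_le (r := N - (#I + #J)) (by omega) hF hG hSG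
  rw [show #J + (N - (#I + #J)) = N - #I by omega, show #I + (N - (#I + #J)) = N - #J by omega]
    at hcorr
  rw [prob_permImage_mem_and_mem hIJ hF hG, density_eq_mul_factorial_div (by omega),
    density_eq_mul_factorial_div (by omega), div_mul_div_comm, div_le_div_iff₀ (by positivity)
    (by positivity)]
  calc (#(disjointPairs F G) * ((#I)! * (#J)! * (N - (#I + #J))!) * (N ! * N !) : ℝ)
      = ((#(disjointPairs F G) * (N - (#I + #J))! * N ! : ℕ) : ℝ) * ((#I)! * (#J)! * N !) := by
        push_cast; ring
    _ ≤ ((#F * #G * (N - #I)! * (N - #J)! : ℕ) : ℝ) * ((#I)! * (#J)! * N !) := by gcongr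
    _ = _ := by push_cast; ring

end RandomPermutation

section Hits

open scoped BigOperators

variable {N l : ℕ} {ι : Type*} [Fintype ι] {I : ι → Finset (Fin N)} {G : Finset (Finset ℕ)}

/-- The number of indices `j` for which the image of `I j` under `σ` belongs to `G`. -/
def hits (I : ι → Finset (Fin N)) (G : Finset (Finset ℕ)) (σ : Equiv.Perm (Fin N)) : ℕ :=
  #{j | permImage σ (I j) ∈ G}

lemma natCast_hits (I : ι → Finset (Fin N)) (G : Finset (Finset ℕ)) (σ : Equiv.Perm (Fin N)) :
    (hits I G σ : ℝ) = ∑ j, if permImage σ (I j) ∈ G then (1 : ℝ) else 0 :=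
  natCast_card_filter _ _

lemma expect_hits (hI : ∀ j, #(I j) = l) (hG : G ⊆ powersetCard l (range N)) :
    𝔼 σ, (hits I G σ : ℝ) = Fintype.card ι * density N l G := by
  classical
  simp only [natCast_hits]
  rw [expect_sum_comm, ← nsmul_eq_mul, ← card_univ, ← sum_const]
  refine sum_congr rfl fun j _ => ?_
  obtain rfl := hI j
  rw [← prob_permImage_mem hG, prob_eq_expect]

lemma IsShifted.expect_hits_sq_le (hS : IsShifted G) (hI : ∀ j, #(I j) = l)
    (hdisj : Pairwise (Disjoint on I)) (hG : G ⊆ powersetCard l (range N)) :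
    𝔼 σ, (hits I G σ : ℝ) ^ 2 ≤
      Fintype.card ι * density N l G + (Fintype.card ι * density N l G) ^ 2 := by
  classical
  have hpair : ∀ i j, prob (fun σ : Equiv.Perm (Fin N) => permImage σ (I i) ∈ G ∧
      permImage σ (I j) ∈ G) ≤ (if i = j then density N l G else 0) + density N l G ^ 2 := by
    intro i j
    split_ifs with hij
    · obtain rfl := hij
      obtain rfl := hI i
      simp only [and_self, prob_permImage_mem hG]
      exact le_add_of_nonneg_right (sq_nonneg _)
    · have hcorr := hS.prob_permImage_mem_and_mem_le hS (hdisj hij) (by rwa [hI]) (by rwa [hI])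
      rw [hI, hI] at hcorr
      linarith
  calc 𝔼 σ, (hits I G σ : ℝ) ^ 2
      = ∑ i, ∑ j, prob (fun σ : Equiv.Perm (Fin N) => permImage σ (I i) ∈ G ∧
          permImage σ (I j) ∈ G) := by
        simp only [natCast_hits, sq, sum_mul_sum, ite_zero_mul_ite_zero, mul_one,
          expect_sum_comm, prob_eq_expect]
    _ ≤ ∑ i : ι, ∑ j, ((if i = j then density N l G else 0) + density N l G ^ 2) :=
        sum_le_sum fun i _ => sum_le_sum fun j _ => hpair i j
    _ = _ := by
        simp only [sum_add_distrib, sum_ite_eq, mem_univ, if_true, sum_const, card_univ,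
          nsmul_eq_mul]
        ring

lemma IsShifted.prob_le_abs_hits_sub_mul_sq_le (hS : IsShifted G) (hI : ∀ j, #(I j) = l)
    (hdisj : Pairwise (Disjoint on I)) (hG : G ⊆ powersetCard l (range N)) {c : ℝ} (hc : 0 ≤ c) :
    prob (fun σ => c ≤ |(hits I G σ : ℝ) - Fintype.card ι * density N l G|) * c ^ 2 ≤
      Fintype.card ι * density N l G :=
  prob_le_abs_sub_mul_sq_le hc (expect_hits hI hG) (hS.expect_hits_sq_le hI hdisj hG)

end Hits

section Link

variable {F : Finset (Finset ℕ)} {r N c x : ℕ} {T T' A : Finset ℕ}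

/-- The sets `A - T` for those `A ∈ F` with `A ∩ [0, r) = T` and `#(A \ T) = c`, translated
by `-r` so that they become subsets of `range N`. -/
def link (F : Finset (Finset ℕ)) (r N c : ℕ) (T : Finset ℕ) : Finset (Finset ℕ) :=
  {A ∈ powersetCard c (range N) | T ∪ A.map (addRightEmbedding r) ∈ F}

lemma mem_link : A ∈ link F r N c T ↔
    (A ⊆ range N ∧ #A = c) ∧ T ∪ A.map (addRightEmbedding r) ∈ F := by
  rw [link, mem_filter, mem_powersetCard]

lemma link_subset_powersetCard : link F r N c T ⊆ powersetCard c (range N) :=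
  filter_subset _ _

lemma disjoint_map_addRight (hT : T ⊆ range r) (A : Finset ℕ) :
    Disjoint T (A.map (addRightEmbedding r)) := by
  refine disjoint_left.2 fun x hxT hxA => ?_
  obtain ⟨y, -, rfl⟩ := mem_map.1 hxA
  exact (Nat.le_add_left r y).not_gt (mem_range.1 (hT hxT))

lemma add_notMem_of_subset_range (hT : T ⊆ range r) (x : ℕ) : x + r ∉ T := fun h =>
  (Nat.le_add_left r x).not_gt (mem_range.1 (hT h))

lemma isShifted_link (hS : IsShifted F) (hT : T ⊆ range r) : IsShifted (link F r N c T) := by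
  intro A hA i j hij hj hi
  rw [mem_link] at hA ⊢
  obtain ⟨⟨hAN, rfl⟩, hAF⟩ := hA
  refine ⟨⟨insert_subset (mem_range.2 (hij.trans (mem_range.1 (hAN hj))))
    ((erase_subset j A).trans hAN), ?_⟩, ?_⟩
  · rw [card_insert_of_notMem fun h => hi (mem_of_mem_erase h), card_erase_add_one hj]
  · have hshift := hS _ hAF (i + r) (j + r) (by omega)
      (mem_union_right _ (mem_map_of_mem (addRightEmbedding r) hj))
      (by simpa [add_notMem_of_subset_range hT] using hi)
    rwa [erase_union_distrib, erase_eq_of_notMem (add_notMem_of_subset_range hT j),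
      ← union_insert, ← addRightEmbedding_apply, ← addRightEmbedding_apply, ← map_erase,
      ← map_insert] at hshift

lemma IsShifted.link_subset_link (hS : IsShifted F) (hT : T ⊆ range r) (hT' : T' ⊆ range r)
    (hcard : #T' = #T) (h : ∀ x, #{y ∈ T | y < x} ≤ #{y ∈ T' | y < x}) :
    link F r N c T ⊆ link F r N c T' := by
  intro A hA
  rw [mem_link] at hA ⊢
  refine ⟨hA.1, hS.mem_of_card_filter_lt_le hA.2 ?_ fun x => ?_⟩
  · rw [card_union_of_disjoint (disjoint_map_addRight hT A),
      card_union_of_disjoint (disjoint_map_addRight hT' A), hcard]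
  · rw [filter_union, filter_union,
      card_union_of_disjoint (disjoint_filter_filter (disjoint_map_addRight hT A)),
      card_union_of_disjoint (disjoint_filter_filter (disjoint_map_addRight hT' A))]
    exact Nat.add_le_add_right (h x) _

lemma IsShifted.link_singleton_subset (hS : IsShifted F) {i j : ℕ} (hij : i ≤ j) (hj : j < r) :
    link F r N c {j} ⊆ link F r N c {i} := by
  refine hS.link_subset_link (by simpa using hj) (by simpa using hij.trans_lt hj) (by simp)
    fun x => ?_
  simp only [filter_singleton]
  grind

lemma IsShifted.shadow_link_subset (hS : IsShifted F) (hT : T ⊆ range r) (hx : x < r)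
    (hxT : x ∉ T) :
    (link F r N (c + 1) T).shadow ⊆ link F r N c (insert x T) := by
  intro B hB
  obtain ⟨A, hA, y, hy, rfl⟩ := mem_shadow_iff.1 hB
  rw [mem_link] at hA ⊢
  obtain ⟨⟨hAN, hAcard⟩, hAF⟩ := hA
  refine ⟨⟨(erase_subset _ _).trans hAN, by rw [card_erase_of_mem hy, hAcard]; rfl⟩, ?_⟩
  have hshift := hS _ hAF x (y + r) (by omega)
    (mem_union_right _ (mem_map_of_mem (addRightEmbedding r) hy)) fun h => by
      obtain h | h := mem_union.1 h
      · exact hxT h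
      · obtain ⟨z, -, rfl⟩ := mem_map.1 h
        exact (Nat.le_add_left r z).not_gt hx
  rwa [erase_union_distrib, erase_eq_of_notMem (add_notMem_of_subset_range hT y),
    ← insert_union, ← addRightEmbedding_apply, ← map_erase] at hshift

lemma hasMatching_of_link {ι : Type*} [Fintype ι] (T A : ι → Finset ℕ) (c : ι → ℕ)
    (hT : ∀ i, T i ⊆ range r) (hTd : Pairwise (Disjoint on T)) (hAd : Pairwise (Disjoint on A))
    (hA : ∀ i, A i ∈ link F r N (c i) (T i)) : HasMatching F (Fintype.card ι) := by
  refine hasMatching_card (fun i => T i ∪ (A i).map (addRightEmbedding r))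
    (fun i => (mem_link.1 (hA i)).2) fun i j hij => ?_
  rw [Function.onFun, disjoint_union_left, disjoint_union_right, disjoint_union_right]
  exact ⟨⟨hTd hij, disjoint_map_addRight (hT i) _⟩, (disjoint_map_addRight (hT j) _).symm,
    (disjoint_map _).2 (hAd hij)⟩

lemma not_isFull_of_subset_link {t : ℕ} (hF : ¬HasMatching F t) (T : Fin t → Finset ℕ)
    (hT : ∀ i, T i ⊆ range r) (hTd : Pairwise (Disjoint on T)) {G : Finset (Finset ℕ)}
    (hGN : G ⊆ powersetCard c (range N)) (hG : ∀ i, G ⊆ link F r N c (T i)) : ¬IsFull G c t := by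
  intro hfull
  obtain ⟨f, hfG, -, hfd⟩ := hfull.exists_matching_subset (a := t) (V := range N) fun i _ hic => by
    have hle : i * t ≤ N := (Nat.mul_le_mul_right t hic).trans (hfull.mul_le hGN)
    calc i * t = #(range (i * t)) := (card_range _).symm
      _ ≤ _ := card_le_card fun x hx => mem_filter.2
        ⟨mem_range.2 ((mem_range.1 hx).trans_le hle), mem_range.1 hx⟩
  have := hasMatching_of_link T f (fun _ => c) hT hTd hfd fun i => hG i (hfG i)
  rw [Fintype.card_fin] at this
  exact hF this

end Link

section Hall

lemma exists_mul_sub_le_sum_of_not_injective {ι : Type*} [Fintype ι] (s : ℕ) (J : ℕ → Finset ι)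
    (hJ : ∀ i j, i ≤ j → j ≤ s → J j ⊆ J i)
    (hno : ∀ f : Fin (s + 1) → ι, Function.Injective f → ¬∀ i : Fin (s + 1), f i ∈ J i) :
    ∃ v ≤ s, #(J s) ≤ v ∧
      (v : ℝ) * (Fintype.card ι - v) ≤ ∑ j ∈ range s, ((Fintype.card ι : ℝ) - #(J j)) := by
  classical
  obtain ⟨X, hX⟩ : ∃ X : Finset (Fin (s + 1)), #(X.biUnion fun i => J i) < #X := by
    by_contra! h
    obtain ⟨f, hf, hfJ⟩ :=
      (all_card_le_biUnion_card_iff_exists_injective fun i : Fin (s + 1) => J i).1 h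
    exact hno f hf hfJ
  have hXne : X.Nonempty := nonempty_of_ne_empty fun h => by simp [h] at hX
  let i₀ := X.min' hXne
  have hi₀ : (i₀ : ℕ) ≤ s := Nat.lt_succ_iff.1 i₀.2
  have hcardX : #X ≤ s + 1 - i₀ := by
    rw [← Fin.card_Ici]
    exact card_le_card fun x hx => mem_Ici.2 (X.min'_le x hx)
  have hcard : #(J i₀) ≤ s - i₀ := by
    have hsub : #(J i₀) ≤ #(X.biUnion fun i => J i) := card_le_card
      (subset_biUnion_of_mem (fun i : Fin (s + 1) => J i) (X.min'_mem hXne))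
    omega
  refine ⟨s - i₀, Nat.sub_le _ _, (card_le_card (hJ i₀ s hi₀ le_rfl)).trans hcard, ?_⟩
  calc ((s - i₀ : ℕ) : ℝ) * (Fintype.card ι - (s - i₀ : ℕ))
      = ∑ _j ∈ Ico (i₀ : ℕ) s, ((Fintype.card ι : ℝ) - (s - i₀ : ℕ)) := by
        rw [sum_const, Nat.card_Ico, nsmul_eq_mul]
    _ ≤ ∑ j ∈ Ico (i₀ : ℕ) s, ((Fintype.card ι : ℝ) - #(J j)) := by
        refine sum_le_sum fun j hj => sub_le_sub_left ?_ _
        obtain ⟨hij, hjs⟩ := mem_Ico.1 hj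
        exact_mod_cast (card_le_card (hJ i₀ j hij hjs.le)).trans hcard
    _ ≤ ∑ j ∈ range s, ((Fintype.card ι : ℝ) - #(J j)) := by
        refine sum_le_sum_of_subset_of_nonneg (fun j hj => mem_range.2 (mem_Ico.1 hj).2)
          fun j _ _ => sub_nonneg.2 ?_
        exact_mod_cast card_le_univ (J j)

variable {N w c c' i j : ℕ}

/-- The first `c` elements of the `j`-th interval of length `w` in `Fin N`. -/
def block (N w c j : ℕ) : Finset (Fin N) := {x | j * w ≤ x ∧ x < j * w + c}

lemma card_block (h : j * w + c ≤ N) : #(block N w c j) = c := by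
  have hmap : (block N w c j).map Fin.valEmbedding = Ico (j * w) (j * w + c) := by
    ext x
    simp only [block, mem_map, mem_filter_univ, Fin.valEmbedding_apply, mem_Ico]
    exact ⟨fun ⟨_, hy, hyx⟩ => hyx ▸ hy, fun hx => ⟨⟨x, hx.2.trans_le h⟩, hx, rfl⟩⟩
  rw [← card_map Fin.valEmbedding, hmap, Nat.card_Ico, Nat.add_sub_cancel_left]

lemma disjoint_block (hc : c ≤ w) (hc' : c' ≤ w) (hij : i ≠ j) :
    Disjoint (block N w c i) (block N w c' j) := by
  refine disjoint_left.2 fun x hi hj => hij ?_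
  rw [block, mem_filter_univ] at hi hj
  have hix : (x : ℕ) / w = i := Nat.div_eq_of_lt_le hi.1 (by rw [Nat.succ_mul]; omega)
  have hjx : (x : ℕ) / w = j := Nat.div_eq_of_lt_le hj.1 (by rw [Nat.succ_mul]; omega)
  exact hix.symm.trans hjx

lemma mul_add_le_of_lt {b : ℕ} (h : b * w ≤ N) (hj : j < b) (hc : c ≤ w) : j * w + c ≤ N :=
  calc j * w + c ≤ (j + 1) * w := by rw [Nat.succ_mul]; omega
    _ ≤ b * w := Nat.mul_le_mul_right w hj
    _ ≤ N := h

lemma IsShifted.exists_mul_sub_le_sum_hits {F : Finset (Finset ℕ)} (hS : IsShifted F) {s l t : ℕ}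
    (hF : ¬HasMatching F (s + 1)) (σ : Equiv.Perm (Fin N)) :
    ∃ v ≤ s, hits (fun j : Fin t => block N l l j) (link F (s + 1) N l {s}) σ ≤ v ∧
      (v : ℝ) * (t - v) ≤
        ∑ i ∈ range s, ((t : ℝ) -
          hits (fun j : Fin t => block N l l j) (link F (s + 1) N l {i}) σ) := by
  simpa only [hits, Fintype.card_fin] using exists_mul_sub_le_sum_of_not_injective s
    (fun i => ({j | permImage σ (block N l l j) ∈ link F (s + 1) N l {i}} : Finset (Fin t)))
    (fun i j hij hj => monotone_filter_right _ fun _ _ h =>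
      hS.link_singleton_subset hij (Nat.lt_succ_iff.2 hj) h)
    fun f hf hmem => hF <| by
      simpa only [Fintype.card_fin] using hasMatching_of_link (fun i : Fin (s + 1) => {(i : ℕ)})
        (fun i => permImage σ (block N l l (f i))) (fun _ => l)
        (fun i => by simp [Fin.is_le])
        (fun i j hij => by simpa [Function.onFun, Fin.ext_iff] using hij)
        (fun i j hij => disjoint_permImage.2 (disjoint_block le_rfl le_rfl
          fun h => hij (hf (Fin.ext h))))
        fun i => (mem_filter.1 (hmem i)).2

end Hall

section MeanInequalities

open scoped BigOperators

variable {F : Finset (Finset ℕ)} {s N l t : ℕ}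

lemma density_nonneg (N l : ℕ) (G : Finset (Finset ℕ)) : 0 ≤ density N l G := by
  unfold density; positivity

lemma density_le_one {G : Finset (Finset ℕ)} (h : G ⊆ powersetCard l (range N)) :
    density N l G ≤ 1 := by
  refine div_le_one_of_le₀ ?_ (Nat.cast_nonneg _)
  have hcard := card_le_card h
  rw [card_powersetCard, card_range] at hcard
  exact_mod_cast hcard

lemma card_block_fin {c : ℕ} (htl : t * l ≤ N) (hc : c ≤ l) (j : Fin t) : #(block N l c j) = c :=
  card_block (mul_add_le_of_lt htl j.2 hc)

lemma pairwise_disjoint_block {c : ℕ} (hc : c ≤ l) :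
    Pairwise (Disjoint on fun j : Fin t => block N l c j) :=
  fun _ _ hij => disjoint_block hc hc (Fin.val_injective.ne hij)

lemma expect_sum_sub_hits_block (htl : t * l ≤ N) (F : Finset (Finset ℕ)) :
    𝔼 σ, ∑ i ∈ range s,
        ((t : ℝ) - hits (fun j : Fin t => block N l l j) (link F (s + 1) N l {i}) σ) =
      t * ∑ i ∈ range s, (1 - density N l (link F (s + 1) N l {i})) := by
  rw [expect_sum_comm, mul_sum]
  refine sum_congr rfl fun i _ => ?_
  rw [expect_sub_distrib, Fintype.expect_const,
    expect_hits (card_block_fin htl le_rfl) link_subset_powersetCard, Fintype.card_fin, mul_sub,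
    mul_one]

lemma IsShifted.sub_mul_density_le_sum (hS : IsShifted F) (hF : ¬HasMatching F (s + 1))
    (htl : t * l ≤ N) (ht : 1 ≤ t) (hst : s ≤ t) :
    ((t : ℝ) - s) * density N l (link F (s + 1) N l {s}) ≤
      ∑ i ∈ range s, (1 - density N l (link F (s + 1) N l {i})) := by
  have htpos : (0 : ℝ) < t := by exact_mod_cast ht
  refine le_of_mul_le_mul_left ?_ htpos
  calc (t : ℝ) * ((t - s) * density N l (link F (s + 1) N l {s}))
      = 𝔼 σ, ((t : ℝ) - s) *
          hits (fun j : Fin t => block N l l j) (link F (s + 1) N l {s}) σ := by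
        rw [← mul_expect, expect_hits (card_block_fin htl le_rfl) link_subset_powersetCard,
          Fintype.card_fin]
        ring
    _ ≤ _ := by
        refine expect_le_expect fun σ _ => ?_
        obtain ⟨v, hvs, hle, hsum⟩ := hS.exists_mul_sub_le_sum_hits (l := l) (t := t) hF σ
        refine le_trans ?_ hsum
        rw [mul_comm (v : ℝ)]
        gcongr
        rw [sub_nonneg]
        exact_mod_cast hvs.trans hst
    _ = _ := expect_sum_sub_hits_block htl F

lemma mul_mul_sub_le_mul_sub {t s v d κ : ℝ} (hκ0 : 0 ≤ κ) (hκ1 : κ ≤ 1)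
    (hκ : κ * t ^ 2 / 4 ≤ s * (t - s)) (hd0 : 0 ≤ d) (hdv : d ≤ v) (hvs : v ≤ s) (hst : s ≤ t) :
    κ * (d * (t - d)) ≤ v * (t - v) := by
  obtain h | h := le_total v (t - d)
  · calc κ * (d * (t - d)) ≤ d * (t - d) :=
          mul_le_of_le_one_left (mul_nonneg hd0 (by linarith)) hκ1
      _ ≤ v * (t - v) := by nlinarith [mul_nonneg (sub_nonneg.2 hdv) (sub_nonneg.2 h)]
  · calc κ * (d * (t - d)) ≤ κ * (t ^ 2 / 4) := by gcongr; linarith [sq_nonneg (t - 2 * d)]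
      _ ≤ s * (t - s) := by linarith
      _ ≤ v * (t - v) := by
        nlinarith [mul_nonneg (sub_nonneg.2 hvs) (show 0 ≤ s + v - t by linarith)]

lemma IsShifted.mul_density_mul_sub_le_sum (hS : IsShifted F) (hF : ¬HasMatching F (s + 1))
    (htl : t * l ≤ N) (ht : 1 ≤ t) (hst : s ≤ t) {κ : ℝ} (hκ0 : 0 ≤ κ) (hκ1 : κ ≤ 1)
    (hκ : κ * (t : ℝ) ^ 2 / 4 ≤ s * (t - s)) :
    κ * (density N l (link F (s + 1) N l {s}) *
        (t - 1 - t * density N l (link F (s + 1) N l {s}))) ≤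
      ∑ i ∈ range s, (1 - density N l (link F (s + 1) N l {i})) := by
  have htpos : (0 : ℝ) < t := by exact_mod_cast ht
  have hst' : (s : ℝ) ≤ t := by exact_mod_cast hst
  have hmean := expect_hits (I := fun j : Fin t => block N l l j)
    (card_block_fin htl le_rfl) (link_subset_powersetCard (F := F) (r := s + 1) (T := {s}))
  have hshifted := isShifted_link hS (N := N) (c := l) (show {s} ⊆ range (s + 1) by simp)
  have hsq := hshifted.expect_hits_sq_le
    (I := fun j : Fin t => block N l l j) (card_block_fin htl le_rfl)
    (pairwise_disjoint_block le_rfl) link_subset_powersetCard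
  rw [Fintype.card_fin] at hmean hsq
  set p := density N l (link F (s + 1) N l {s})
  set X := hits (fun j : Fin t => block N l l j) (link F (s + 1) N l {s})
  refine le_of_mul_le_mul_left ?_ htpos
  calc (t : ℝ) * (κ * (p * (t - 1 - t * p)))
      = κ * (t * (t * p) - (t * p + (t * p) ^ 2)) := by ring
    _ ≤ κ * (t * 𝔼 σ, (X σ : ℝ) - 𝔼 σ, (X σ : ℝ) ^ 2) := by rw [hmean]; gcongr
    _ = 𝔼 σ, κ * (X σ * ((t : ℝ) - X σ)) := by
        rw [mul_expect, ← expect_sub_distrib, mul_expect]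
        exact expect_congr rfl fun σ _ => by ring
    _ ≤ _ := by
        refine expect_le_expect fun σ _ => ?_
        obtain ⟨v, hvs, hle, hsum⟩ := hS.exists_mul_sub_le_sum_hits (l := l) (t := t) hF σ
        exact (mul_mul_sub_le_mul_sub hκ0 hκ1 hκ (Nat.cast_nonneg _) (by exact_mod_cast hle)
          (by exact_mod_cast hvs) hst').trans hsum
    _ = _ := expect_sum_sub_hits_block htl F

end MeanInequalities

section Assembly

variable {F : Finset (Finset ℕ)} {s N c b m d r u k a : ℕ}

lemma card_filter_lt_pair (u x : ℕ) :
    #{y ∈ ({u, u + 1} : Finset ℕ) | y < x} =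
      (if u < x then 1 else 0) + if u + 1 < x then 1 else 0 := by
  rw [filter_insert, filter_singleton]
  split_ifs <;> first | omega | simp

lemma IsShifted.link_pair_subset (hS : IsShifted F) {v : ℕ} (huv : u ≤ v) (hv : v + 1 < r) :
    link F r N c {v, v + 1} ⊆ link F r N c {u, u + 1} := by
  refine hS.link_subset_link ?_ ?_ ?_ fun x => ?_
  · intro x; simp only [mem_insert, mem_singleton, mem_range]; omega
  · intro x; simp only [mem_insert, mem_singleton, mem_range]; omega
  · rw [card_pair (by omega), card_pair (by omega)]
  · rw [card_filter_lt_pair, card_filter_lt_pair]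
    split_ifs <;> omega

lemma IsFull.exists_matching_disjoint (hF : IsFull F k m) (hFN : F ⊆ powersetCard k (range N))
    {U : Finset ℕ} (hU : ∀ i, 1 ≤ i → i ≤ k → #{x ∈ U | x < i * m} + i * a ≤ i * m) :
    ∃ f : Fin a → Finset ℕ,
      (∀ j, f j ∈ F) ∧ (∀ j, Disjoint U (f j)) ∧ Pairwise (Disjoint on f) := by
  obtain ⟨f, hf, hfU, hfd⟩ := hF.exists_matching_subset (V := range N \ U) (a := a)
    fun i hi hik => by
      have hle : i * m ≤ N := (Nat.mul_le_mul_right m hik).trans (hF.mul_le hFN)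
      have hsdiff : ({x ∈ range N \ U | x < i * m} : Finset ℕ) =
          range (i * m) \ {x ∈ U | x < i * m} := by grind
      have hcard := le_card_sdiff {x ∈ U | x < i * m} (range (i * m))
      rw [card_range] at hcard
      rw [hsdiff]
      have := hU i hi hik
      omega
  exact ⟨f, hf, fun j => disjoint_of_subset_right (hfU j) disjoint_sdiff, hfd⟩

lemma pairwise_disjoint_sumElim {ι κ α : Type*} {f : ι → Finset α} {g : κ → Finset α}
    (hf : Pairwise (Disjoint on f)) (hg : Pairwise (Disjoint on g))
    (hfg : ∀ i j, Disjoint (f i) (g j)) : Pairwise (Disjoint on Sum.elim f g) := by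
  rintro (i | i) (j | j) hij
  · exact hf fun h => hij (congrArg _ h)
  · exact hfg i j
  · exact (hfg j i).symm
  · exact hg fun h => hij (congrArg _ h)

lemma exists_injective_sum {β : Type*} {A B : Finset β} (hA : d ≤ #A) (hB : d + r ≤ #B) :
    ∃ g : Fin d ⊕ Fin r → β,
      Function.Injective g ∧ (∀ i, g (.inl i) ∈ A) ∧ ∀ j, g (.inr j) ∈ B := by
  classical
  obtain ⟨A', hA', hA'card⟩ := exists_subset_card_eq hA
  have hsdiff : r ≤ #(B \ A') := (by omega : r ≤ #B - #A').trans (le_card_sdiff _ _)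
  obtain ⟨B', hB', hB'card⟩ := exists_subset_card_eq hsdiff
  let eA := A'.equivFinOfCardEq hA'card
  let eB := B'.equivFinOfCardEq hB'card
  refine ⟨Sum.elim (fun i => eA.symm i) fun j => eB.symm j,
    Function.Injective.sumElim (Subtype.val_injective.comp eA.symm.injective)
      (Subtype.val_injective.comp eB.symm.injective) fun i j h => ?_,
    fun i => hA' (eA.symm i).2, fun j => (mem_sdiff.1 (hB' (eB.symm j).2)).1⟩
  exact (mem_sdiff.1 (hB' (eB.symm j).2)).2 (h ▸ (eA.symm i).2)

/-- The traces on `[0, d + 2 * r)` of the matching assembled in `hasMatching_of_traces`: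
`d` singletons, then `r` pairs, then `r` empty sets. -/
def traces (d r : ℕ) : (Fin d ⊕ Fin r) ⊕ Fin r → Finset ℕ :=
  Sum.elim (Sum.elim (fun i => {(i : ℕ)}) fun j => {d + 2 * (j : ℕ), d + 2 * (j : ℕ) + 1})
    fun _ => ∅

lemma traces_subset_range (x : (Fin d ⊕ Fin r) ⊕ Fin r) : traces d r x ⊆ range (d + 2 * r) := by
  obtain (i | j) | _ := x
  · simpa [traces] using i.2.trans_le (Nat.le_add_right _ _)
  · intro x
    simp only [traces, Sum.elim_inl, Sum.elim_inr, mem_insert, mem_singleton, mem_range]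
    omega
  · simp [traces]

lemma pairwise_disjoint_traces (d r : ℕ) : Pairwise (Disjoint on traces d r) := by
  refine pairwise_disjoint_sumElim (pairwise_disjoint_sumElim ?_ ?_ ?_) ?_ ?_
  · exact fun i j hij => disjoint_singleton.2 (Fin.val_injective.ne hij)
  · intro i j hij
    have := Fin.val_injective.ne hij
    refine disjoint_left.2 fun x => ?_
    simp only [mem_insert, mem_singleton]
    omega
  · intro i j
    refine disjoint_left.2 fun x => ?_
    simp only [mem_insert, mem_singleton]
    omega
  · exact fun _ _ _ => disjoint_empty_left _
  · exact fun _ _ => disjoint_empty_right _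

lemma IsShifted.hasMatching_of_traces (hS : IsShifted F) (hs : d + 2 * r = s + 1) {c₁ c₂ c₃ : ℕ}
    {f : Fin d ⊕ Fin r → Finset ℕ} {g : Fin r → Finset ℕ}
    (h₁ : ∀ i, f (.inl i) ∈ link F (s + 1) N c₁ {s})
    (h₂ : ∀ j, f (.inr j) ∈ link F (s + 1) N c₂ {s - 1, s})
    (h₃ : ∀ j, g j ∈ link F (s + 1) N c₃ ∅) (hf : Pairwise (Disjoint on f))
    (hg : Pairwise (Disjoint on g)) (hfg : ∀ i j, Disjoint (f i) (g j)) :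
    HasMatching F (s + 1) := by
  have hmatching := hasMatching_of_link (F := F) (r := s + 1) (N := N) (traces d r) (Sum.elim f g)
    (Sum.elim (Sum.elim (fun _ => c₁) fun _ => c₂) fun _ => c₃)
    (fun x => hs ▸ traces_subset_range x) (pairwise_disjoint_traces d r)
    (pairwise_disjoint_sumElim hf hg hfg) ?_
  · simpa [← hs, two_mul, add_assoc] using hmatching
  · rintro ((i | j) | j)
    · exact hS.link_singleton_subset (by omega) (Nat.lt_succ_self s) (h₁ i)
    · have hj := j.2
      have hpair := h₂ j
      rw [show ({s - 1, s} : Finset ℕ) = {s - 1, s - 1 + 1} by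
        rw [Nat.sub_add_cancel (by omega)]] at hpair
      exact hS.link_pair_subset (by omega) (by omega) hpair
    · exact h₃ j

lemma permImage_block_subset (σ : Equiv.Perm (Fin N)) {w : ℕ} (hc : c ≤ w) (j : Fin b) :
    permImage σ (block N w c j) ⊆ permImage σ {x : Fin N | (x : ℕ) < b * w} := by
  refine permImage_subset_permImage σ fun x hx => mem_filter.2 ⟨mem_univ x, ?_⟩
  exact (mem_filter.1 hx).2.2.trans_le (mul_add_le_of_lt le_rfl j.2 hc)

lemma IsShifted.hasMatching_of_hits (hS : IsShifted F) (hs : d + 2 * r = s + 1)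
    (hfull : IsFull (link F (s + 1) N (c + 2) ∅) (c + 2) m) {σ : Equiv.Perm (Fin N)}
    (h₁ : d ≤ hits (fun j : Fin b => block N (c + 1) (c + 1) j) (link F (s + 1) N (c + 1) {s}) σ)
    (h₂ : d + r ≤ hits (fun j : Fin b => block N (c + 1) c j) (link F (s + 1) N c {s - 1, s}) σ)
    (h₃ : ∀ i, 1 ≤ i → i ≤ c + 2 →
      #{x ∈ permImage σ {x : Fin N | (x : ℕ) < b * (c + 1)} | x < i * m} + i * r ≤ i * m) :
    HasMatching F (s + 1) := by
  obtain ⟨e, he, heU, hed⟩ := hfull.exists_matching_disjoint link_subset_powersetCard h₃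
  obtain ⟨g, hg, hg₁, hg₂⟩ := exists_injective_sum h₁ h₂
  let w : Fin d ⊕ Fin r → ℕ := Sum.elim (fun _ => c + 1) fun _ => c
  have hw : ∀ x, w x ≤ c + 1 := by
    rintro (_ | _)
    · exact le_rfl
    · exact Nat.le_succ c
  exact hS.hasMatching_of_traces hs (f := fun x => permImage σ (block N (c + 1) (w x) (g x)))
    (fun i => (mem_filter.1 (hg₁ i)).2) (fun j => (mem_filter.1 (hg₂ j)).2) he
    (fun x y hxy => disjoint_permImage.2
      (disjoint_block (hw x) (hw y) (Fin.val_injective.ne (hg.ne hxy))))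
    hed fun x j => disjoint_of_subset_left (permImage_block_subset σ (hw x) (g x)) (heU j)

end Assembly

section Concentration

variable {N w R m K : ℕ} {ε a : ℝ}

lemma isShifted_powersetCard_range (k R : ℕ) : IsShifted (powersetCard k (range R)) := by
  intro A hA i j hij hj hi
  obtain ⟨hAR, rfl⟩ := mem_powersetCard.1 hA
  refine mem_powersetCard.2 ⟨insert_subset (mem_range.2 (hij.trans (mem_range.1 (hAR hj))))
    ((erase_subset j A).trans hAR), ?_⟩
  rw [card_insert_of_notMem fun h => hi (mem_of_mem_erase h), card_erase_add_one hj]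

lemma card_filter_permImage_le_hits (hw : w ≤ N) (σ : Equiv.Perm (Fin N)) (R : ℕ) :
    #{y ∈ permImage σ {x : Fin N | (x : ℕ) < w} | y < R} ≤
      hits (fun j : Fin w => {Fin.castLE hw j}) (powersetCard 1 (range R)) σ := by
  refine (card_le_card fun y hy => ?_).trans
    (card_image_le (f := fun j : Fin w => (σ (Fin.castLE hw j) : ℕ)))
  simp only [permImage, mem_filter, mem_map, mem_univ, true_and] at hy
  obtain ⟨⟨_, ⟨x, hx, rfl⟩, rfl⟩, hR⟩ := hy
  refine mem_image.2 ⟨⟨x, hx⟩, mem_filter.2 ⟨mem_univ _, ?_⟩, rfl⟩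
  simpa [mem_powersetCard, permImage] using hR

lemma prob_add_le_card_filter_permImage_mul_sq_le (hw : w ≤ N) (hR : R ≤ N) (ha : 0 ≤ a) :
    prob (fun σ : Equiv.Perm (Fin N) =>
      (w : ℝ) / N * R + a ≤ #{y ∈ permImage σ {x : Fin N | (x : ℕ) < w} | y < R}) * a ^ 2 ≤
      (w : ℝ) / N * R := by
  have hmean : (Fintype.card (Fin w) : ℝ) * density N 1 (powersetCard 1 (range R)) =
      (w : ℝ) / N * R := by
    simp only [density, Fintype.card_fin, card_powersetCard, card_range, Nat.choose_one_right]
    ring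
  have hchebyshev := (isShifted_powersetCard_range 1 R).prob_le_abs_hits_sub_mul_sq_le
    (I := fun j : Fin w => {Fin.castLE hw j}) (fun _ => card_singleton _)
    (fun i j hij => disjoint_singleton.2 ((Fin.castLE_injective hw).ne hij))
    (powersetCard_mono (range_subset_range.2 hR)) ha
  rw [hmean] at hchebyshev
  refine (mul_le_mul_of_nonneg_right (prob_mono fun σ hσ => ?_) (sq_nonneg a)).trans hchebyshev
  have hcard : (#{y ∈ permImage σ {x : Fin N | (x : ℕ) < w} | y < R} : ℝ) ≤ _ :=
    Nat.cast_le.2 (card_filter_permImage_le_hits hw σ R)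
  exact (by linarith : a ≤ _).trans (le_abs_self _)

lemma prob_mul_le_card_filter_permImage_le (hε : 0 < ε) (hw : w ≤ N) (hm : 1 ≤ m) {P : ℝ}
    (hP : 0 < P) :
    prob (fun σ : Equiv.Perm (Fin N) => P * (((w : ℝ) / N + ε) * m) ≤
      #{y ∈ permImage σ {x : Fin N | (x : ℕ) < w} | y < min N ⌊P * m⌋₊}) * (m * ε ^ 2) ≤ 1 / P := by
  have : (0 : ℝ) < m := by exact_mod_cast hm
  have hR : ((min N ⌊P * m⌋₊ : ℕ) : ℝ) ≤ P * m :=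
    (Nat.cast_le.2 (min_le_right _ _)).trans (Nat.floor_le (by positivity))
  have hle_one : (w : ℝ) / N ≤ 1 := div_le_one_of_le₀ (Nat.cast_le.2 hw) (Nat.cast_nonneg N)
  have hmean : (w : ℝ) / N * (min N ⌊P * m⌋₊ : ℕ) ≤ (w : ℝ) / N * (P * m) := by gcongr
  have hchebyshev := prob_add_le_card_filter_permImage_mul_sq_le hw
    (min_le_left N ⌊P * m⌋₊) (a := P * m * ε) (by positivity)
  rw [le_div_iff₀ hP]
  refine le_of_mul_le_mul_left ?_ (by positivity : 0 < P * m)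
  calc P * m * (prob _ * (m * ε ^ 2) * P) = prob _ * (P * m * ε) ^ 2 := by ring
    _ ≤ _ := mul_le_mul_of_nonneg_right (prob_mono fun σ hσ => le_trans ?_ hσ) (sq_nonneg _)
    _ ≤ (w : ℝ) / N * (P * m) := hchebyshev.trans hmean
    _ ≤ P * m * 1 := by rw [mul_comm]; gcongr
  linarith

lemma sum_one_div_one_add_pow_mul_le_one (hε : 0 < ε) (M : ℕ) :
    (∑ g ∈ range M, 1 / (1 + ε) ^ (g + 1)) * ε ≤ 1 := by
  calc (∑ g ∈ range M, 1 / (1 + ε) ^ (g + 1)) * ε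
      = ∑ g ∈ range M, (1 / (1 + ε) ^ g - 1 / (1 + ε) ^ (g + 1)) := by
        rw [sum_mul]
        refine sum_congr rfl fun g _ => ?_
        field_simp
        ring
    _ = 1 - 1 / (1 + ε) ^ M := by rw [sum_range_sub']; simp
    _ ≤ 1 := sub_le_self _ (by positivity)

lemma exists_pow_mul_le_card_filter (hε : 0 < ε) (hK : K * m ≤ N) (ha : 0 ≤ a) {M : ℕ}
    (hM : (K : ℝ) < (1 + ε) ^ M) {U : Finset ℕ} {i : ℕ} (hi : 1 ≤ i) (hiK : i ≤ K)
    (hU : i * a ≤ #{y ∈ U | y < i * m}) :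
    ∃ g ∈ range M, (1 + ε) ^ g * a ≤ #{y ∈ U | y < min N ⌊(1 + ε) ^ (g + 1) * m⌋₊} := by
  obtain ⟨g, hgi, hig⟩ := exists_nat_pow_near (Nat.one_le_cast (α := ℝ).2 hi)
    (lt_add_of_pos_right 1 hε)
  have hgM : g < M := (pow_lt_pow_iff_right₀ (lt_add_of_pos_right 1 hε)).1
    ((hgi.trans (Nat.cast_le.2 hiK)).trans_lt hM)
  have hle : i * m ≤ min N ⌊(1 + ε) ^ (g + 1) * m⌋₊ := by
    refine le_min ((Nat.mul_le_mul_right m hiK).trans hK) (Nat.le_floor ?_)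
    push_cast
    gcongr
  refine ⟨g, mem_range.2 hgM, ?_⟩
  calc (1 + ε) ^ g * a ≤ i * a := by gcongr
    _ ≤ #{y ∈ U | y < i * m} := hU
    _ ≤ _ := Nat.cast_le.2 (card_filter_lt_mono U hle)

-- The union bound runs over a geometric grid of values of `i`, so that the failure probabilities
-- are summable.
lemma prob_exists_mul_le_card_filter_permImage_le (hε : 0 < ε) (hw : w ≤ N) (hm : 1 ≤ m)
    (hK : K * m ≤ N) (ha : (1 + ε) * (((w : ℝ) / N + ε) * m) ≤ a) :
    prob (fun σ : Equiv.Perm (Fin N) => ∃ i : ℕ, 1 ≤ i ∧ i ≤ K ∧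
      i * a ≤ #{y ∈ permImage σ {x : Fin N | (x : ℕ) < w} | y < i * m}) * (m * ε ^ 3) ≤ 1 := by
  have ha0 : 0 ≤ a := le_trans (by positivity) ha
  obtain ⟨M, hM⟩ := pow_unbounded_of_one_lt (K : ℝ) (lt_add_of_pos_right 1 hε)
  calc prob _ * (m * ε ^ 3)
      ≤ (∑ g ∈ range M, prob fun σ : Equiv.Perm (Fin N) =>
          (1 + ε) ^ (g + 1) * (((w : ℝ) / N + ε) * m) ≤
            #{y ∈ permImage σ {x : Fin N | (x : ℕ) < w} |
              y < min N ⌊(1 + ε) ^ (g + 1) * m⌋₊}) * (m * ε ^ 3) := by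
        refine mul_le_mul_of_nonneg_right (le_trans (prob_mono fun σ hσ => ?_)
          (prob_exists_le _ _)) (by positivity)
        obtain ⟨i, hi, hiK, hU⟩ := hσ
        obtain ⟨g, hg, hgU⟩ := exists_pow_mul_le_card_filter hε hK ha0 hM hi hiK hU
        refine ⟨g, hg, le_trans ?_ hgU⟩
        rw [pow_succ, mul_assoc]
        gcongr
    _ = (∑ g ∈ range M, (prob fun σ : Equiv.Perm (Fin N) =>
          (1 + ε) ^ (g + 1) * (((w : ℝ) / N + ε) * m) ≤
            #{y ∈ permImage σ {x : Fin N | (x : ℕ) < w} |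
              y < min N ⌊(1 + ε) ^ (g + 1) * m⌋₊}) * (m * ε ^ 2)) * ε := by
        rw [← sum_mul]; ring
    _ ≤ (∑ g ∈ range M, 1 / (1 + ε) ^ (g + 1)) * ε := by
        refine mul_le_mul_of_nonneg_right (sum_le_sum fun g _ => ?_) hε.le
        exact prob_mul_le_card_filter_permImage_le hε hw hm (by positivity)
    _ ≤ 1 := sum_one_div_one_add_pow_mul_le_one hε M

end Concentration

section PairLink

variable {F : Finset (Finset ℕ)} {s N c : ℕ}

lemma density_succ_eq_mul_div {l : ℕ} (hl : l + 1 ≤ N) (G : Finset (Finset ℕ)) :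
    density N (l + 1) G * ((N : ℝ) - l) = density N l G * (l + 1) := by
  have hchoose : (N.choose (l + 1) : ℝ) * (l + 1) = N.choose l * ((N : ℝ) - l) := by
    rw [← Nat.cast_sub (Nat.le_of_succ_le hl)]
    exact_mod_cast Nat.choose_succ_right_eq N l
  have hpos : (0 : ℝ) < N.choose l := by exact_mod_cast Nat.choose_pos (Nat.le_of_succ_le hl)
  have hpos' : (0 : ℝ) < N.choose (l + 1) := by exact_mod_cast Nat.choose_pos hl
  rw [density, density, div_mul_eq_mul_div, div_mul_eq_mul_div, div_eq_div_iff hpos'.ne' hpos.ne']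
  linear_combination -(#G : ℝ) * hchoose

lemma IsShifted.card_link_le_mul_card_link (hS : IsShifted F) (hs : 1 ≤ s)
    (hF : ¬HasMatching F (s + 1)) :
    #(link F (s + 1) N (c + 1) {s}) ≤ s * #(link F (s + 1) N c {s - 1, s}) := by
  have hT : ({s} : Finset ℕ) ⊆ range (s + 1) := by simp
  have hfull : ¬IsFull (link F (s + 1) N (c + 1) {s}) (c + 1) (s + 1) :=
    not_isFull_of_subset_link hF (fun i => {(i : ℕ)}) (fun i => by simp [Fin.is_le])
      (fun i j hij => disjoint_singleton.2 (Fin.val_injective.ne hij)) link_subset_powersetCard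
      fun i => hS.link_singleton_subset (Fin.is_le i) (Nat.lt_succ_self s)
  calc #(link F (s + 1) N (c + 1) {s}) ≤ s * #(link F (s + 1) N (c + 1) {s}).shadow :=
        card_le_mul_card_shadow (isShifted_link hS hT) (Nat.le_add_left 1 c)
          (fun A hA => (mem_link.1 hA).1.2) hfull
    _ ≤ s * #(link F (s + 1) N c {s - 1, s}) := Nat.mul_le_mul_left s <| card_le_card <|
        hS.shadow_link_subset hT (by omega) (by simp; omega)

lemma IsShifted.mul_density_link_le (hS : IsShifted F) (hs : 2 ≤ s) (hF : ¬HasMatching F (s + 1))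
    (hN : (5 / 3 : ℝ) * s * (c + 1) - 1 ≤ N) :
    ((5 / 3 : ℝ) * s - 1) * density N (c + 1) (link F (s + 1) N (c + 1) {s}) ≤
      s * density N c (link F (s + 1) N c {s - 1, s}) := by
  have hs' : (2 : ℝ) ≤ s := by exact_mod_cast hs
  have hc : (0 : ℝ) < (c : ℝ) + 1 := by positivity
  have hcN : c + 1 ≤ N := by
    have : (c : ℝ) + 1 ≤ N := by nlinarith
    exact_mod_cast this
  have hcard : (#(link F (s + 1) N (c + 1) {s}) : ℝ) ≤ s * #(link F (s + 1) N c {s - 1, s}) := by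
    exact_mod_cast hS.card_link_le_mul_card_link (by omega) hF
  refine le_of_mul_le_mul_right ?_ hc
  calc ((5 / 3 : ℝ) * s - 1) * density N (c + 1) (link F (s + 1) N (c + 1) {s}) * (c + 1)
      = density N (c + 1) (link F (s + 1) N (c + 1) {s}) *
          (((5 / 3 : ℝ) * s - 1) * (c + 1)) := by ring
    _ ≤ density N (c + 1) (link F (s + 1) N (c + 1) {s}) * ((N : ℝ) - c) :=
        mul_le_mul_of_nonneg_left (by linarith) (density_nonneg _ _ _)
    _ = density N c (link F (s + 1) N (c + 1) {s}) * (c + 1) := density_succ_eq_mul_div hcN _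
    _ ≤ s * density N c (link F (s + 1) N c {s - 1, s}) * (c + 1) := by
        rw [density, density, mul_div_assoc']
        gcongr

end PairLink

section LinkEstimate

variable {F G : Finset (Finset ℕ)} {s N c m b w l x : ℕ} {p q : ℝ}

lemma IsShifted.prob_hits_lt_mul_sq_le {ι : Type*} [Fintype ι] {I : ι → Finset (Fin N)}
    (hS : IsShifted G) (hI : ∀ j, #(I j) = l) (hdisj : Pairwise (Disjoint on I))
    (hG : G ⊆ powersetCard l (range N)) {a : ℝ} (ha : 0 ≤ a)
    (hx : x + a ≤ Fintype.card ι * density N l G) :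
    prob (fun σ => hits I G σ < x) * a ^ 2 ≤ Fintype.card ι := by
  calc prob (fun σ => hits I G σ < x) * a ^ 2
      ≤ prob (fun σ => a ≤ |(hits I G σ : ℝ) - Fintype.card ι * density N l G|) * a ^ 2 := by
        refine mul_le_mul_of_nonneg_right (prob_mono fun σ hσ => ?_) (sq_nonneg a)
        have hσ' : (hits I G σ : ℝ) ≤ x := by exact_mod_cast hσ.le
        rw [abs_sub_comm]
        exact (by linarith : a ≤ _).trans (le_abs_self _)
    _ ≤ Fintype.card ι * density N l G := hS.prob_le_abs_hits_sub_mul_sq_le hI hdisj hG ha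
    _ ≤ Fintype.card ι := mul_le_of_le_one_right (Nat.cast_nonneg _) (density_le_one hG)

lemma IsShifted.prob_hits_block_lt_le (hS : IsShifted G) (hG : G ⊆ powersetCard l (range N))
    (hbw : b * w ≤ N) (hlw : l ≤ w) (hs : 10 ^ 8 ≤ s) (hb : (b : ℝ) ≤ 1.17 * s)
    (hx : x + 0.003 * (s : ℝ) ≤ b * density N l G) :
    prob (fun σ => hits (fun j : Fin b => block N w l j) G σ < x) ≤ 0.01 := by
  have hs' : (10 ^ 8 : ℝ) ≤ s := by exact_mod_cast hs
  have hchebyshev := hS.prob_hits_lt_mul_sq_le (card_block_fin hbw hlw)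
    (pairwise_disjoint_block hlw) hG (a := 0.003 * s) (by positivity)
    (by rwa [Fintype.card_fin])
  rw [Fintype.card_fin] at hchebyshev
  refine le_of_mul_le_mul_right (hchebyshev.trans ?_) (by positivity : 0 < (0.003 * (s : ℝ)) ^ 2)
  nlinarith

-- The `b ≈ 1.17 m` blocks cover a proportion `1.17 m / (5 s / 3) = 0.702 m / s` of the ground set,
-- and the right side is the `m - r` elements per level that may be lost to them.
lemma mul_div_add_mul_le_sub {s m : ℝ} (hs : 0 < s) (hm : 0.66 * s ≤ m) (hms : m ≤ s) :
    (1 + 0.005) * ((0.70203 * m / s + 0.005) * m) ≤ m - 2 / 7 * s := by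
  have hprod := mul_nonneg (sub_nonneg.2 hm) (sub_nonneg.2 hms)
  refine le_of_mul_le_mul_right ?_ hs
  calc (1 + 0.005) * ((0.70203 * m / s + 0.005) * m) * s
      = 1.005 * ((0.70203 * m + 0.005 * s) * m) := by field_simp; ring
    _ ≤ (m - 2 / 7 * s) * s := by nlinarith

lemma prob_exists_lt_card_filter_permImage_le (hs : 10 ^ 8 ≤ s)
    (hN : (5 / 3 : ℝ) * s * (c + 1) - 1 ≤ N) (hm : 0.66 * (s : ℝ) ≤ m) (hms : m ≤ s)
    (hmN : (c + 2) * m ≤ N) (hbN : b * (c + 1) ≤ N) (hb : (b : ℝ) ≤ 1.17 * m) {r : ℕ}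
    (hr : (r : ℝ) ≤ 2 / 7 * s) :
    prob (fun σ : Equiv.Perm (Fin N) => ∃ i : ℕ, 1 ≤ i ∧ i ≤ c + 2 ∧ i * ((m : ℝ) - r) ≤
      #{y ∈ permImage σ {x : Fin N | (x : ℕ) < b * (c + 1)} | y < i * m}) ≤ 0.2 := by
  have hs' : (10 ^ 8 : ℝ) ≤ s := by exact_mod_cast hs
  have hms' : (m : ℝ) ≤ s := by exact_mod_cast hms
  have hNlower : 1.6666 * (s : ℝ) * (c + 1) ≤ N := by nlinarith [Nat.cast_nonneg (α := ℝ) c]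
  have hNpos : (0 : ℝ) < N := lt_of_lt_of_le (by positivity) hNlower
  have hratio : ((b * (c + 1) : ℕ) : ℝ) / N ≤ 0.70203 * m / s := by
    rw [div_le_div_iff₀ hNpos (by positivity)]
    push_cast
    calc (b : ℝ) * (c + 1) * s ≤ 1.17 * m * (c + 1) * s := by gcongr
      _ ≤ 0.70203 * m * (1.6666 * s * (c + 1)) := by
        have : 0 ≤ (m : ℝ) * (s * (c + 1)) := by positivity
        linarith
      _ ≤ 0.70203 * m * N := by gcongr
  have hconc := prob_exists_mul_le_card_filter_permImage_le (ε := 0.005) (a := m - r)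
    (by norm_num) hbN (by rify; linarith) hmN <| by
      calc _ ≤ (1 + 0.005) * ((0.70203 * (m : ℝ) / s + 0.005) * m) := by gcongr
        _ ≤ m - 2 / 7 * s := mul_div_add_mul_le_sub (by linarith) hm hms'
        _ ≤ (m : ℝ) - r := by linarith
  have hpos : (0 : ℝ) < m * 0.005 ^ 3 := by
    have : (0 : ℝ) < m := by linarith
    positivity
  exact le_of_mul_le_mul_right (hconc.trans (by linarith)) hpos

-- A matching with `d ≈ 3 s / 7` singletons, `r ≈ 2 s / 7` pairs and `r` empty traces, the sets for
-- the first two kinds being taken among `b ≈ 1.17 m` blocks. As `p * m ≥ 0.369 s`, the expected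
-- numbers of usable blocks are `b * p ≥ 0.4317 s > d` and `b * q ≥ 0.7195 s > d + r`.
lemma exists_matching_parameters (hs : 10 ^ 8 ≤ s) (hp : 0 ≤ p)
    (hp1 : p ≤ 1) (hpq : 1.66666 * p ≤ q) (hpm : 0.369 * (s : ℝ) ≤ p * m) :
    ∃ b r d : ℕ, d + 2 * r = s + 1 ∧ (b : ℝ) ≤ 1.17 * m ∧ (r : ℝ) ≤ 2 / 7 * s ∧
      d + 0.003 * (s : ℝ) ≤ b * p ∧ ((d + r : ℕ) : ℝ) + 0.003 * s ≤ b * q := by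
  have hs' : (10 ^ 8 : ℝ) ≤ s := by exact_mod_cast hs
  obtain ⟨b, hb⟩ : ∃ b, b = ⌊(1.17 : ℝ) * m⌋₊ := ⟨_, rfl⟩
  obtain ⟨r, hr⟩ : ∃ r, r = ⌊(2 / 7 : ℝ) * s⌋₊ := ⟨_, rfl⟩
  have hb_le : (b : ℝ) ≤ 1.17 * m := hb ▸ Nat.floor_le (by positivity)
  have hle_b : 1.17 * (m : ℝ) - 1 ≤ b := hb ▸ (Nat.sub_one_lt_floor _).le
  have hr_le : (r : ℝ) ≤ 2 / 7 * s := hr ▸ Nat.floor_le (by positivity)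
  have hle_r : 2 / 7 * (s : ℝ) - 1 ≤ r := hr ▸ (Nat.sub_one_lt_floor _).le
  have h2r : 2 * r ≤ s + 1 := by rify; linarith
  have hd : ((s + 1 - 2 * r : ℕ) : ℝ) = s + 1 - 2 * r := by push_cast [h2r]; ring
  have hbp : 0.43173 * (s : ℝ) - 1 ≤ b * p := by nlinarith
  have hbq : 1.66666 * (b * p) ≤ b * q := by nlinarith
  refine ⟨b, r, s + 1 - 2 * r, Nat.sub_add_cancel h2r, hb_le, hr_le, ?_, ?_⟩
  · rw [hd]; linarith
  · rw [Nat.cast_add, hd]; linarith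

lemma IsShifted.hasMatching_of_isFull_link (hS : IsShifted F) (hs : 10 ^ 8 ≤ s)
    (hN : (5 / 3 : ℝ) * s * (c + 1) - 1 ≤ N)
    (hfull : IsFull (link F (s + 1) N (c + 2) ∅) (c + 2) m) (hm : 0.66 * (s : ℝ) ≤ m)
    (hms : m ≤ s)
    (hpm : 0.369 * (s : ℝ) ≤ density N (c + 1) (link F (s + 1) N (c + 1) {s}) * m) :
    HasMatching F (s + 1) := by
  by_contra hF
  have hs' : (10 ^ 8 : ℝ) ≤ s := by exact_mod_cast hs
  have hms' : (m : ℝ) ≤ s := by exact_mod_cast hms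
  set p := density N (c + 1) (link F (s + 1) N (c + 1) {s})
  set q := density N c (link F (s + 1) N c {s - 1, s})
  have hp0 : 0 ≤ p := density_nonneg _ _ _
  have hpq : 1.66666 * p ≤ q := by
    have := hS.mul_density_link_le (by omega) hF hN
    nlinarith
  obtain ⟨b, r, d, hdr, hb, hr, hd, hdr'⟩ :=
    exists_matching_parameters hs hp0 (density_le_one link_subset_powersetCard) hpq hpm
  have hbs : (b : ℝ) ≤ 1.17 * s := by linarith
  have hbN : b * (c + 1) ≤ N := by
    rify
    nlinarith [Nat.cast_nonneg (α := ℝ) c]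
  have hprob₁ := (isShifted_link hS (by simp)).prob_hits_block_lt_le link_subset_powersetCard hbN
    le_rfl hs hbs hd
  have hprob₂ := (isShifted_link hS (by intro x; simp; omega)).prob_hits_block_lt_le
    link_subset_powersetCard hbN c.le_succ hs hbs hdr'
  have hprob₃ := prob_exists_lt_card_filter_permImage_le hs hN hm hms
    (hfull.mul_le link_subset_powersetCard) hbN hb hr
  have hprob := (prob_or_le _ _).trans
    (add_le_add hprob₁ ((prob_or_le _ _).trans (add_le_add hprob₂ hprob₃)))
  obtain ⟨σ, hσ⟩ := exists_not_of_prob_lt_one (hprob.trans_lt (by norm_num))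
  push Not at hσ
  refine hF (hS.hasMatching_of_hits hdr hfull hσ.1 hσ.2.1 fun i hi hic => ?_)
  have hlt := hσ.2.2 i hi hic
  rw [mul_sub, lt_sub_iff_add_lt] at hlt
  exact_mod_cast hlt.le

lemma succ_mul_le_mul_mul_sub {s t m p : ℝ} (hs : 10 ^ 8 ≤ s) (ht : 5 / 3 * s - 2 ≤ t)
    (hts : t ≤ 5 / 3 * s) (htm : t - s - 1 ≤ m) (hms : m ≤ s) (hp : 0 ≤ p)
    (hpm : p * m ≤ 0.369 * s) : (m + 1) * p ≤ 0.955 * (p * (t - 1 - t * p)) := by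
  have hm : 0 < m := by linarith
  have htpm : t * (p * m) ≤ 5 / 3 * s * (0.369 * s) := by gcongr
  have hfactor : m + 1 ≤ 0.955 * (t - 1 - t * p) := by
    refine le_of_mul_le_mul_right ?_ hm
    have hbound : (5 / 3 * s - 2) * m ≤ t * m := by gcongr
    have hs_sq : s * 10 ^ 8 ≤ s * s := by gcongr
    have hprod : 0 ≤ (s - m) * (m - (2 / 3 * s - 3)) := mul_nonneg (by linarith) (by linarith)
    have hprod' : 0 ≤ (s - m) * s := mul_nonneg (by linarith) (by linarith)
    nlinarith
  calc (m + 1) * p ≤ 0.955 * (t - 1 - t * p) * p := by gcongr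
    _ = 0.955 * (p * (t - 1 - t * p)) := by ring

-- For `t ≈ 5 s / 3` the condition `κ * t ^ 2 / 4 ≤ s * (t - s)` of `mul_density_mul_sub_le_sum`
-- reads `κ ≤ 0.96`; the proof takes `κ = 0.955`.
lemma IsShifted.succ_mul_density_le_sum (hS : IsShifted F) (hF : ¬HasMatching F (s + 1))
    (hs : 10 ^ 8 ≤ s) (hN : (5 / 3 : ℝ) * s * (c + 1) - 1 ≤ N)
    (hfull : IsFull (link F (s + 1) N (c + 2) ∅) (c + 2) m) (hms : m ≤ s) :
    ((m : ℝ) + 1) * density N (c + 1) (link F (s + 1) N (c + 1) {s}) ≤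
      ∑ i ∈ range s, (1 - density N (c + 1) (link F (s + 1) N (c + 1) {i})) := by
  have hs' : (10 ^ 8 : ℝ) ≤ s := by exact_mod_cast hs
  have hms' : (m : ℝ) ≤ s := by exact_mod_cast hms
  set p := density N (c + 1) (link F (s + 1) N (c + 1) {s})
  have hp0 : 0 ≤ p := density_nonneg _ _ _
  obtain ⟨t, ht⟩ : ∃ t, t = ⌊(5 / 3 : ℝ) * s - 1⌋₊ := ⟨_, rfl⟩
  have hts : (t : ℝ) ≤ 5 / 3 * s - 1 := ht ▸ Nat.floor_le (by linarith)
  have hst : 5 / 3 * (s : ℝ) - 2 ≤ t := by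
    have := (Nat.sub_one_lt_floor ((5 / 3 : ℝ) * s - 1)).le
    rw [← ht] at this
    linarith
  have htN : t * (c + 1) ≤ N := by
    rify
    nlinarith [Nat.cast_nonneg (α := ℝ) c]
  have hst' : s ≤ t := by rify; linarith
  obtain htm | htm := le_total ((m : ℝ) + 1) (t - s)
  · calc ((m : ℝ) + 1) * p ≤ (t - s) * p := by gcongr
      _ ≤ _ := hS.sub_mul_density_le_sum hF htN (by omega) hst'
  have hpm : p * m ≤ 0.369 * s := by
    by_contra! hpm
    exact hF (hS.hasMatching_of_isFull_link hs hN hfull (by linarith) hms hpm.le)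
  calc ((m : ℝ) + 1) * p ≤ 0.955 * (p * (t - 1 - t * p)) :=
        succ_mul_le_mul_mul_sub hs' hst (by linarith) (by linarith) hms' hp0 hpm
    _ ≤ _ := hS.mul_density_mul_sub_le_sum hF htN (by omega) hst' (by norm_num) (by norm_num)
        (by nlinarith)

lemma exists_isFull_not_isFull_succ {G : Finset (Finset ℕ)} {k s : ℕ} (hk : 1 ≤ k)
    (hG : ¬IsFull G k (s + 1)) : ∃ m ≤ s, IsFull G k m ∧ ¬IsFull G k (m + 1) := by
  classical
  have hzero : IsFull G k 0 := fun A _ hA => by simpa using hA 1 le_rfl hk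
  have hex : ∃ m, ¬IsFull G k m := ⟨s + 1, hG⟩
  have hne : Nat.find hex ≠ 0 := fun h => (h ▸ Nat.find_spec hex) hzero
  obtain ⟨m, hm⟩ := Nat.exists_eq_succ_of_ne_zero hne
  have hmin := Nat.find_min' hex hG
  have hspec := Nat.find_spec hex
  rw [hm] at hspec
  exact ⟨m, by omega, not_not.1 (Nat.find_min hex (by omega)), hspec⟩

lemma IsShifted.card_link_empty_add_sum_card_link_le (hS : IsShifted F)
    (hF : ¬HasMatching F (s + 1)) (hs : 10 ^ 8 ≤ s)
    (hN : (5 / 3 : ℝ) * s * (c + 1) - 1 ≤ N) :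
    #(link F (s + 1) N (c + 2) ∅) + ∑ i ∈ range (s + 1), #(link F (s + 1) N (c + 1) {i}) ≤
      s * N.choose (c + 1) := by
  obtain ⟨m, hms, hfull, hnotfull⟩ := exists_isFull_not_isFull_succ (Nat.le_add_left 1 (c + 1)) <|
    not_isFull_of_subset_link hF (fun _ => ∅) (by simp) (fun _ _ _ => disjoint_empty_left _)
      link_subset_powersetCard fun _ => subset_rfl
  have hempty : #(link F (s + 1) N (c + 2) ∅) ≤ m * #(link F (s + 1) N (c + 1) {s}) :=
    calc #(link F (s + 1) N (c + 2) ∅) ≤ m * #(link F (s + 1) N (c + 2) ∅).shadow :=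
          card_le_mul_card_shadow (isShifted_link hS (empty_subset _)) (Nat.le_add_left 1 _)
            (fun A hA => (mem_link.1 hA).1.2) hnotfull
      _ ≤ m * #(link F (s + 1) N (c + 1) {s}) := Nat.mul_le_mul_left m <| card_le_card <|
          hS.shadow_link_subset (empty_subset _) s.lt_succ_self (notMem_empty s)
  have hkey := hS.succ_mul_density_le_sum hF hs hN hfull hms
  have hcN : c + 1 ≤ N := by
    have : (10 ^ 8 : ℝ) ≤ s := by exact_mod_cast hs
    rify
    nlinarith [Nat.cast_nonneg (α := ℝ) c]
  have hchoose : (0 : ℝ) < N.choose (c + 1) := by exact_mod_cast Nat.choose_pos hcN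
  simp only [density, sum_sub_distrib, sum_const, card_range, nsmul_eq_mul, mul_one, ← sum_div]
    at hkey
  rw [mul_div_assoc', le_sub_iff_add_le, ← add_div, div_le_iff₀ hchoose] at hkey
  rify at hempty ⊢
  rw [sum_range_succ]
  linarith

end LinkEstimate

section Counting

variable {F : Finset (Finset ℕ)} {r s N c k n : ℕ} {T A B : Finset ℕ}

lemma union_map_inter_range (hT : T ⊆ range r) (A : Finset ℕ) :
    (T ∪ A.map (addRightEmbedding r)) ∩ range r = T := by
  ext x
  simp only [mem_inter, mem_union, mem_map, addRightEmbedding_apply, mem_range]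
  constructor
  · rintro ⟨hx | ⟨y, -, rfl⟩, hxr⟩
    · exact hx
    · omega
  · exact fun hx => ⟨.inl hx, mem_range.1 (hT hx)⟩

lemma inter_range_union_map (hB : B ⊆ range (N + r)) :
    B ∩ range r ∪ {x ∈ range N | x + r ∈ B}.map (addRightEmbedding r) = B := by
  ext x
  simp only [mem_union, mem_inter, mem_map, mem_filter, addRightEmbedding_apply, mem_range]
  constructor
  · rintro (hx | ⟨y, hy, rfl⟩)
    · exact hx.1
    · exact hy.2
  · intro hx
    have := mem_range.1 (hB hx)
    obtain h | h := lt_or_ge x r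
    · exact .inl ⟨hx, h⟩
    · exact .inr ⟨x - r, ⟨by omega, by rwa [Nat.sub_add_cancel h]⟩, Nat.sub_add_cancel h⟩

lemma card_union_map (hT : T ⊆ range r) (A : Finset ℕ) :
    #(T ∪ A.map (addRightEmbedding r)) = #T + #A := by
  rw [card_union_of_disjoint (disjoint_map_addRight hT A), card_map]

lemma card_filter_inter_range_eq (hF : F ⊆ powersetCard k (range (N + r))) (hT : T ⊆ range r)
    (hc : #T + c = k) : #{A ∈ F | A ∩ range r = T} = #(link F r N c T) := by
  symm
  refine card_bij (fun A _ => T ∪ A.map (addRightEmbedding r))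
    (fun A hA => mem_filter.2 ⟨(mem_link.1 hA).2, union_map_inter_range hT A⟩)
    (fun A _ B _ h => ?_) fun B hB => ?_
  · have hsdiff := congrArg (· \ T) h
    simp only [union_sdiff_cancel_left (disjoint_map_addRight hT _)] at hsdiff
    exact map_injective _ hsdiff
  · obtain ⟨hBF, rfl⟩ := mem_filter.1 hB
    obtain ⟨hBN, hBk⟩ := mem_powersetCard.1 (hF hBF)
    have hunion := inter_range_union_map hBN
    refine ⟨{x ∈ range N | x + r ∈ B}, mem_link.2 ⟨⟨filter_subset _ _, ?_⟩, ?_⟩, hunion⟩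
    · have hcard := card_union_map hT {x ∈ range N | x + r ∈ B}
      rw [hunion] at hcard
      omega
    · rwa [hunion]

lemma card_link_powersetCard (hT : T ⊆ range r) (hc : #T + c = k) :
    #(link (powersetCard k (range (N + r))) r N c T) = N.choose c := by
  rw [link, filter_true_of_mem, card_powersetCard, card_range]
  intro A hA
  obtain ⟨hAN, hAc⟩ := mem_powersetCard.1 hA
  refine mem_powersetCard.2 ⟨union_subset (hT.trans (range_subset_range.2 (by omega))) ?_, ?_⟩
  · intro x hx
    obtain ⟨y, hy, rfl⟩ := mem_map.1 hx
    exact mem_range.2 (Nat.add_lt_add_right (mem_range.1 (hAN hy)) r)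
  · rw [card_union_map hT, hAc, hc]

lemma card_filter_card_inter_range_eq_one (hF : F ⊆ powersetCard (c + 1) (range (N + r))) :
    #{A ∈ F | #(A ∩ range r) = 1} = ∑ i ∈ range r, #(link F r N c {i}) := by
  have hunion : {A ∈ F | #(A ∩ range r) = 1} =
      (range r).biUnion fun i => {A ∈ F | A ∩ range r = {i}} := by
    ext A
    simp only [mem_filter, mem_biUnion, card_eq_one]
    constructor
    · rintro ⟨hA, i, hi⟩
      exact ⟨i, inter_subset_right (hi ▸ mem_singleton_self i), hA, hi⟩
    · rintro ⟨i, -, hA, hi⟩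
      exact ⟨hA, i, hi⟩
  rw [hunion, card_biUnion]
  · refine sum_congr rfl fun i hi => card_filter_inter_range_eq hF (singleton_subset_iff.2 hi) ?_
    rw [card_singleton, add_comm]
  · refine fun i _ j _ hij => disjoint_filter.2 fun A _ hi hj => hij ?_
    exact singleton_injective (hi.symm.trans hj)

lemma card_eq_link_add_sum_link_add (hF : F ⊆ powersetCard (c + 2) (range (N + r))) :
    #F = #(link F r N (c + 2) ∅) + ∑ i ∈ range r, #(link F r N (c + 1) {i}) +
      #{A ∈ F | 2 ≤ #(A ∩ range r)} := by
  have hempty := card_filter_inter_range_eq (c := c + 2) hF (empty_subset _) (by simp)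
  have hsplit := card_filter_add_card_filter_not (s := F) (fun A => #(A ∩ range r) ≤ 1)
  have hsplit' := card_filter_add_card_filter_not (s := {A ∈ F | #(A ∩ range r) ≤ 1})
    (fun A => A ∩ range r = ∅)
  have hone : {A ∈ F | #(A ∩ range r) ≤ 1 ∧ ¬A ∩ range r = ∅} =
      {A ∈ F | #(A ∩ range r) = 1} :=
    filter_congr fun A _ => by rw [← card_eq_zero]; omega
  have hzero : {A ∈ F | #(A ∩ range r) ≤ 1 ∧ A ∩ range r = ∅} = {A ∈ F | A ∩ range r = ∅} :=
    filter_congr fun A _ => by rw [← card_eq_zero]; omega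
  simp only [not_le] at hsplit
  rw [filter_filter, filter_filter, hone, hzero, hempty,
    card_filter_card_inter_range_eq_one hF] at hsplit'
  rw [← hsplit, ← hsplit']
  rfl

lemma IsShifted.card_le_choose_sub_choose (hS : IsShifted F) (hF : ¬HasMatching F (s + 1))
    (hs : 10 ^ 8 ≤ s) (hFN : F ⊆ powersetCard (c + 2) (range (N + (s + 1))))
    (hN : (5 / 3 : ℝ) * s * (c + 1) - 1 ≤ N) :
    #F ≤ (N + (s + 1)).choose (c + 2) - (N + 1).choose (c + 2) := by
  have hlinks := hS.card_link_empty_add_sum_card_link_le hF hs hN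
  have hsplit := card_eq_link_add_sum_link_add hFN
  have htotal := card_eq_link_add_sum_link_add
    (subset_refl (powersetCard (c + 2) (range (N + (s + 1)))))
  rw [card_powersetCard, card_range, card_link_powersetCard (empty_subset _) (by simp),
    sum_congr rfl fun i hi => card_link_powersetCard (singleton_subset_iff.2 hi)
      (by rw [card_singleton]; omega), sum_const, card_range, smul_eq_mul, add_one_mul s]
    at htotal
  have hmono := card_le_card (filter_subset_filter (fun A => 2 ≤ #(A ∩ range (s + 1))) hFN)
  have hpascal : (N + 1).choose (c + 2) = N.choose (c + 1) + N.choose (c + 2) :=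
    Nat.choose_succ_succ' N (c + 1)
  omega

lemma card_le_choose_sub_choose (hs : 10 ^ 8 ≤ s) (hk : 2 ≤ k)
    (hn : (5 / 3 : ℝ) * s * k - (2 / 3 : ℝ) * s ≤ n) (hFn : F ⊆ powersetCard k (range n))
    (hF : ¬HasMatching F (s + 1)) : #F ≤ n.choose k - (n - s).choose k := by
  obtain ⟨F', hF'n, hcard, hS, hmatching⟩ := exists_isShifted F hFn
  have hs' : (10 ^ 8 : ℝ) ≤ s := by exact_mod_cast hs
  obtain ⟨c, rfl⟩ := Nat.exists_eq_add_of_le' hk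
  push_cast at hn
  have hsn : s + 1 ≤ n := by
    rify
    nlinarith [Nat.cast_nonneg (α := ℝ) c]
  obtain ⟨N, rfl⟩ := Nat.exists_eq_add_of_le' hsn
  have hN : (5 / 3 : ℝ) * s * (c + 1) - 1 ≤ N := by
    push_cast at hn
    linarith
  rw [← hcard, show N + (s + 1) - s = N + 1 by omega]
  exact hS.card_le_choose_sub_choose (fun h => hF (hmatching _ h)) hs hF'n hN

/-- The `k`-subsets of `range n` that meet `range s`: the extremal family. -/
def meetingFamily (n k s : ℕ) : Finset (Finset ℕ) :=
  powersetCard k (range n) \ powersetCard k (range n \ range s)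

lemma card_meetingFamily (n k s : ℕ) :
    #(meetingFamily n k s) = n.choose k - (n - s).choose k := by
  rw [meetingFamily, card_sdiff_of_subset (powersetCard_mono sdiff_subset), card_powersetCard,
    card_powersetCard, card_range, card_sdiff, card_range, range_inter_range, card_range]
  congr 2
  omega

lemma not_hasMatching_meetingFamily (n k s : ℕ) :
    ¬HasMatching (meetingFamily n k s) (s + 1) := by
  rintro ⟨f, hf, hd⟩
  have hmeets : ∀ i, ∃ x ∈ f i, x < s := by
    intro i
    by_contra! hle
    obtain ⟨hfn, hfs⟩ := mem_sdiff.1 (hf i)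
    obtain ⟨hfn, hfk⟩ := mem_powersetCard.1 hfn
    exact hfs (mem_powersetCard.2 ⟨fun x hx => mem_sdiff.2
      ⟨hfn hx, fun hxs => (hle x hx).not_gt (mem_range.1 hxs)⟩, hfk⟩)
  choose g hgf hgs using hmeets
  have hinj : Function.Injective fun i => (⟨g i, hgs i⟩ : Fin s) := fun i j hij => by
    by_contra hne
    exact disjoint_left.1 (hd hne) (hgf i) (Fin.mk.inj hij ▸ hgf j)
  simpa using Fintype.card_le_of_injective _ hinj

end Counting

section MatchingNumber

variable {F : Finset (Finset ℕ)} {t : ℕ}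

lemma HasMatching.mono {t' : ℕ} (hF : HasMatching F t) (h : t' ≤ t) : HasMatching F t' := by
  obtain ⟨f, hf, hd⟩ := hF
  exact ⟨f ∘ Fin.castLE h, fun i => hf _, fun i j hij => hd ((Fin.castLE_injective h).ne hij)⟩

lemma bddAbove_card_matching (F : Finset (Finset ℕ)) :
    BddAbove {t : ℕ | ∃ M : Finset (Finset ℕ), M ⊆ F ∧
      (M : Set (Finset ℕ)).Pairwise (fun A B => Disjoint A B) ∧ M.card = t} := by
  refine ⟨#F, ?_⟩
  rintro _ ⟨M, hM, -, rfl⟩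
  exact card_le_card hM

lemma hasMatching_of_le_matchingNumber (h : t ≤ matchingNumber F) : HasMatching F t := by
  obtain ⟨M, hMF, hM, hcard⟩ : matchingNumber F ∈ {t : ℕ | ∃ M : Finset (Finset ℕ), M ⊆ F ∧
      (M : Set (Finset ℕ)).Pairwise (fun A B => Disjoint A B) ∧ M.card = t} :=
    Nat.sSup_mem ⟨0, ∅, by simp⟩ (bddAbove_card_matching F)
  refine HasMatching.mono ?_ (h.trans_eq hcard.symm)
  let e := M.equivFin.symm
  exact ⟨fun i => e i, fun i => hMF (e i).2, fun i j hij =>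
    hM (e i).2 (e j).2 fun heq => hij (e.injective (Subtype.ext heq))⟩

lemma HasMatching.le_matchingNumber (hF : HasMatching F t) (hempty : ∅ ∉ F) :
    t ≤ matchingNumber F := by
  obtain ⟨f, hf, hd⟩ := hF
  have hinj : Function.Injective f := fun i j hij => by
    by_contra hne
    have hdisj : Disjoint (f i) (f j) := hd hne
    rw [hij, disjoint_self, bot_eq_empty] at hdisj
    exact hempty (hdisj ▸ hf j)
  refine le_csSup (bddAbove_card_matching F) ⟨univ.image f, ?_, ?_, ?_⟩
  · exact image_subset_iff.2 fun i _ => hf i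
  · rw [coe_image, coe_univ, Set.image_univ]
    rintro _ ⟨i, rfl⟩ _ ⟨j, rfl⟩ hij
    exact hd fun h => hij (congrArg f h)
  · rw [card_image_of_injective _ hinj, card_fin]

lemma le_matchingNumber_iff_hasMatching (hempty : ∅ ∉ F) :
    t ≤ matchingNumber F ↔ HasMatching F t :=
  ⟨hasMatching_of_le_matchingNumber, fun hF => hF.le_matchingNumber hempty⟩

lemma empty_notMem_of_subset_powersetCard {k n : ℕ} (hk : k ≠ 0)
    (hF : F ⊆ powersetCard k (range n)) : ∅ ∉ F := fun h =>
  hk (mem_powersetCard.1 (hF h)).2.symm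

end MatchingNumber

theorem erdos_matching_five_thirds :
    ∃ s₀ : ℕ, ∀ s k n : ℕ, s₀ ≤ s → 2 ≤ k →
      (5 / 3 : ℝ) * s * k - (2 / 3 : ℝ) * s ≤ (n : ℝ) →
      maxSizeEMC n k s = n.choose k - (n - s).choose k := by
  refine ⟨10 ^ 8, fun s k n hs hk hn => ?_⟩
  have hmatching {F} (hF : F ⊆ powersetCard k (range n)) :
      matchingNumber F ≤ s ↔ ¬HasMatching F (s + 1) := by
    rw [← le_matchingNumber_iff_hasMatching (empty_notMem_of_subset_powersetCard (by omega) hF),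
      Nat.succ_le_iff, not_lt]
  refine IsGreatest.csSup_eq ⟨?_, ?_⟩
  · exact ⟨meetingFamily n k s, sdiff_subset,
      (hmatching sdiff_subset).2 (not_hasMatching_meetingFamily n k s), card_meetingFamily n k s⟩
  · rintro _ ⟨F, hFn, hF, rfl⟩
    exact card_le_choose_sub_choose hs hk hn hFn ((hmatching hFn).1 hF)
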